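/- Let Ω ⊆ ℂ be a nonempty open connected set, z₀ a frontier point of Ω, and u : ℂ → ℂ holomorphic on Ω and nonconstant on Ω. Let W be an open neighborhood of z₀ and ũ : ℂ → ℂ a function that is C^∞ on W, agrees with u on W ∩ Ω, and satisfies ũ(z₀) = 0. Then the following are equivalent: (1) ũ vanishes to finite order at z₀ in the L² sense; (2) there exist an open neighborhood U ⊆ W of z₀ and a constant C such that |∂̄ũ(z)| ≤ C·|ũ(z)| for all z ∈ U; (3) there exists an open neighborhood U ⊆ W of z₀ such that ∫_U |∂̄ũ(z)|²/|ũ(z)|² dv < ∞. -/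

import Mathlib

/-!
Since `∂̄f` vanishes on `Ω`, it is flat at the boundary point `z₀`. A cut-off of `f` is the Cauchy
transform of its `∂̄`-derivative, and the Cauchy transform of a density which is flat at `z₀` has a
Taylor expansion in powers of `z - z₀` to every order. Hence either `f` is flat at `z₀` or
`|z - z₀|ᵏ = O(f)` for some `k`. If `f` vanishes to finite order, the second case holds and
`∂̄f = O(|z - z₀|ᵏ) = O(f)`, so that `∂̄f / f` is bounded and a fortiori square integrable.

Conversely, suppose that `q = ∂̄f / f` is square integrable and `f` is flat. The Cauchy transform
`w` of a cut-off of `q` formally solves `∂̄w = q`, so that `f e⁻ʷ` is holomorphic, and `|w|` is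
dominated by a potential `p` with locally integrable exponential. As `q` is singular at the zeros
of `f`, this is made rigorous with the smooth regularisation `f̄ / (|f|² + δ)` of `1 / f`; for a
cut-off `a` it gives `∫ |a f| e⁻ᵖ ≤ C ∫ |f ∂̄a| eᵖ`, and flatness allows `f / (z - z₀)ᵏ` in place
of `f`. As `k → ∞` this forces `f = 0` near `z₀`, against the identity theorem for `u`.
-/

open MeasureTheory

/-- The Wirtinger derivative `∂̄u(z) = (D(1) + i·D(i))/2`, where `D = fderiv ℝ u z`. -/
noncomputable def wirtingerDBar (f : ℂ → ℂ) (z : ℂ) : ℂ :=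
  (fderiv ℝ f z 1 + Complex.I * fderiv ℝ f z Complex.I) / 2

/-- `f` vanishes to infinite order at `z₀` in the `L²` sense. -/
def VanishesInfiniteOrder (f : ℂ → ℂ) (z₀ : ℂ) : Prop :=
  ∀ m : ℝ, 0 ≤ m →
    Filter.Tendsto (fun r : ℝ => r ^ (-m) * ∫ z in Metric.ball z₀ r, ‖f z‖ ^ 2)
      (nhdsWithin 0 (Set.Ioi 0)) (nhds 0)

open Filter Asymptotics Topology
open scoped ENNReal ComplexConjugate ContDiff Convolution

/-! ### The operator `∂̄` -/

section WirtingerDBar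

variable {f g : ℂ → ℂ} {z : ℂ}

lemma fderiv_apply_eq_re_add_im (f : ℂ → ℂ) (z v : ℂ) :
    fderiv ℝ f z v = v.re * fderiv ℝ f z 1 + v.im * fderiv ℝ f z Complex.I := by
  have hv : v = v.re • (1 : ℂ) + v.im • Complex.I := by simp [Complex.re_add_im]
  conv_lhs => rw [hv]
  rw [map_add, map_smul, map_smul, Complex.real_smul, Complex.real_smul]

lemma fderiv_apply_add_I_mul_fderiv_apply (f : ℂ → ℂ) (z v : ℂ) :
    fderiv ℝ f z v + Complex.I * fderiv ℝ f z (Complex.I * v) =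
      2 * conj v * wirtingerDBar f z := by
  have hconj : conj v = v.re - v.im * Complex.I := by apply Complex.ext <;> simp
  rw [fderiv_apply_eq_re_add_im f z v, fderiv_apply_eq_re_add_im f z (Complex.I * v), hconj,
    wirtingerDBar, Complex.I_mul_re, Complex.I_mul_im, Complex.ofReal_neg]
  linear_combination ((v.im : ℂ) * fderiv ℝ f z Complex.I) * Complex.I_mul_I

lemma wirtingerDBar_eq_of_hasFDerivAt {f' : ℂ →L[ℝ] ℂ} (hf : HasFDerivAt f f' z) :
    wirtingerDBar f z = (f' 1 + Complex.I * f' Complex.I) / 2 := by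
  rw [wirtingerDBar, hf.fderiv]

lemma wirtingerDBar_congr (h : f =ᶠ[𝓝 z] g) : wirtingerDBar f z = wirtingerDBar g z := by
  rw [wirtingerDBar, wirtingerDBar, h.fderiv_eq]

lemma wirtingerDBar_comp {F : ℂ → ℂ} {F' : ℂ} (hF : HasDerivAt F F' (f z))
    (hf : DifferentiableAt ℝ f z) :
    wirtingerDBar (fun z => F (f z)) z = F' * wirtingerDBar f z := by
  have h : HasFDerivAt (fun z => F (f z)) _ z :=
    (hF.hasFDerivAt.restrictScalars ℝ).comp z hf.hasFDerivAt
  rw [wirtingerDBar_eq_of_hasFDerivAt h, wirtingerDBar]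
  simp
  ring

lemma wirtingerDBar_eq_zero (hf : DifferentiableAt ℂ f z) : wirtingerDBar f z = 0 := by
  rw [wirtingerDBar_eq_of_hasFDerivAt (hf.hasDerivAt.hasFDerivAt.restrictScalars ℝ)]
  simp [← mul_assoc]

lemma wirtingerDBar_mul (hf : DifferentiableAt ℝ f z) (hg : DifferentiableAt ℝ g z) :
    wirtingerDBar (fun z => f z * g z) z =
      wirtingerDBar f z * g z + f z * wirtingerDBar g z := by
  simp only [wirtingerDBar, fderiv_fun_mul hf hg, _root_.add_apply, _root_.smul_apply, smul_eq_mul]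
  ring

lemma wirtingerDBar_conj (z : ℂ) : wirtingerDBar (fun z => conj z) z = 1 := by
  have h : HasFDerivAt (fun z => conj z) (Complex.conjCLE : ℂ →L[ℝ] ℂ) z :=
    Complex.conjCLE.hasFDerivAt
  rw [wirtingerDBar_eq_of_hasFDerivAt h]
  simp

lemma contDiffOn_wirtingerDBar {W : Set ℂ} {m n : WithTop ℕ∞} (hW : IsOpen W)
    (hf : ContDiffOn ℝ n f W) (hmn : m + 1 ≤ n) : ContDiffOn ℝ m (wirtingerDBar f) W := by
  have hD := hf.fderiv_of_isOpen hW hmn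
  exact ((hD.clm_apply contDiffOn_const).add
    (contDiffOn_const.mul (hD.clm_apply contDiffOn_const))).div_const 2

lemma contDiff_wirtingerDBar {m n : WithTop ℕ∞} (hf : ContDiff ℝ n f) (hmn : m + 1 ≤ n) :
    ContDiff ℝ m (wirtingerDBar f) :=
  contDiffOn_univ.1 (contDiffOn_wirtingerDBar isOpen_univ (contDiffOn_univ.2 hf) hmn)

lemma continuous_wirtingerDBar (hf : ContDiff ℝ 1 f) : Continuous (wirtingerDBar f) :=
  (contDiff_wirtingerDBar (m := 0) hf (by simp)).continuous

lemma support_wirtingerDBar_subset (f : ℂ → ℂ) :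
    Function.support (wirtingerDBar f) ⊆ tsupport f := fun z hz => by
  contrapose! hz
  simp [wirtingerDBar, fderiv_of_notMem_tsupport (𝕜 := ℝ) hz]

lemma hasCompactSupport_wirtingerDBar (hf : HasCompactSupport f) :
    HasCompactSupport (wirtingerDBar f) :=
  hf.mono' (support_wirtingerDBar_subset f)

lemma ae_wirtingerDBar_eq_zero (hf : Differentiable ℝ f) :
    ∀ᵐ z, f z = 0 → wirtingerDBar f z = 0 := by
  have hmeas : MeasurableSet (f ⁻¹' {0}) :=
    (isClosed_singleton.preimage hf.continuous).measurableSet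
  have happrox : ApproximatesLinearOn f (0 : ℂ →L[ℝ] ℂ) (f ⁻¹' {0}) 0 := fun x hx y hy => by
    simp [show f x = 0 from hx, show f y = 0 from hy]
  have hderiv := happrox.norm_fderiv_sub_le volume hmeas (fderiv ℝ f) fun x _ =>
    (hf x).hasFDerivAt.hasFDerivWithinAt
  rw [ae_restrict_iff' hmeas] at hderiv
  filter_upwards [hderiv] with z hz h0
  have hzero : fderiv ℝ f z = 0 := by simpa using hz h0
  simp [wirtingerDBar, hzero]

end WirtingerDBar

/-! ### Flat functions -/

/-- `f` is flat at `x₀`: it vanishes to infinite order there in the pointwise sense. -/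
def IsFlatAt {E F : Type*} [NormedAddCommGroup E] [NormedAddCommGroup F] (f : E → F) (x₀ : E) :
    Prop :=
  ∀ N : ℕ, f =O[𝓝 x₀] fun x => ‖x - x₀‖ ^ N

/-- The uniform version of flatness at `x₀`, with bounds by powers of `‖x - x₀‖` on the whole
space; it holds for bounded functions which are flat at `x₀`. -/
def IsGloballyFlatAt {E F : Type*} [NormedAddCommGroup E] [NormedAddCommGroup F] (f : E → F)
    (x₀ : E) : Prop :=
  ∀ N : ℕ, ∃ M, ∀ x, ‖f x‖ ≤ M * ‖x - x₀‖ ^ N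

section IsFlatAt

variable {E F : Type*} [NormedAddCommGroup E] [NormedAddCommGroup F] {f g : E → F} {x₀ : E}

lemma IsFlatAt.congr (hf : IsFlatAt f x₀) (h : f =ᶠ[𝓝 x₀] g) : IsFlatAt g x₀ :=
  fun N => (hf N).congr' h .rfl

lemma IsFlatAt.isGloballyFlatAt {B : ℝ} (hf : IsFlatAt f x₀) (hB : ∀ x, ‖f x‖ ≤ B) :
    IsGloballyFlatAt f x₀ := by
  intro N
  obtain ⟨C, hC⟩ := (hf N).bound
  obtain ⟨ε, hε, hball⟩ := Metric.eventually_nhds_iff_ball.1 hC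
  refine ⟨max C (B / ε ^ N), fun x => ?_⟩
  obtain hx | hx := lt_or_ge (dist x x₀) ε
  · calc ‖f x‖ ≤ C * ‖‖x - x₀‖ ^ N‖ := hball x hx
      _ = C * ‖x - x₀‖ ^ N := by rw [norm_pow, norm_norm]
      _ ≤ max C (B / ε ^ N) * ‖x - x₀‖ ^ N := by gcongr; exact le_max_left _ _
  · rw [dist_eq_norm] at hx
    have hB0 : 0 ≤ B := (norm_nonneg _).trans (hB x)
    calc ‖f x‖ ≤ B / ε ^ N * ε ^ N := by rw [div_mul_cancel₀ _ (by positivity)]; exact hB x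
      _ ≤ max C (B / ε ^ N) * ‖x - x₀‖ ^ N := by gcongr; exact le_max_right _ _

lemma exists_contDiff_hasCompactSupport_eventuallyEq [NormedSpace ℝ E] [FiniteDimensional ℝ E]
    [NormedSpace ℝ F] {n : ℕ} (hf : ContDiffAt ℝ n f x₀) :
    ∃ g : E → F, ContDiff ℝ n g ∧ HasCompactSupport g ∧ g =ᶠ[𝓝 x₀] f := by
  obtain ⟨ε, hε, hball⟩ := Metric.eventually_nhds_iff_ball.1 (hf.eventually (by simp))
  let χ : ContDiffBump x₀ := ⟨ε / 3, ε / 2, by positivity, by linarith⟩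
  refine ⟨fun x => χ x • f x, contDiff_iff_contDiffAt.2 fun x => ?_, χ.hasCompactSupport.smul_right,
    χ.eventuallyEq_one.mono fun x hx => ?_⟩
  · by_cases hx : x ∈ Metric.ball x₀ ε
    · exact χ.contDiffAt.smul (hball x hx)
    · have hx' : x ∉ tsupport fun x => χ x • f x := fun hmem => hx <|
        Metric.closedBall_subset_ball (half_lt_self hε) <| χ.tsupport_eq ▸
          tsupport_smul_subset_left _ _ hmem
      exact contDiffAt_const.congr_of_eventuallyEq (notMem_tsupport_iff_eventuallyEq.1 hx')
  · simp only [hx, Pi.one_apply, one_smul]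

end IsFlatAt

section FlatSmooth

variable {E F : Type*} [NormedAddCommGroup E] [NormedSpace ℝ E] [NormedAddCommGroup F]
  [NormedSpace ℝ F] {f : E → F} {x₀ : E}

lemma iteratedFDeriv_isLittleO_pow (hf : ContDiffAt ℝ (⊤ : ℕ∞) f x₀)
    (h0 : ∀ j, iteratedFDeriv ℝ j f x₀ = 0) (N j : ℕ) :
    iteratedFDeriv ℝ j f =o[𝓝 x₀] fun x => ‖x - x₀‖ ^ N := by
  have hdiff (j : ℕ) : ∀ᶠ x in 𝓝 x₀, DifferentiableAt ℝ (iteratedFDeriv ℝ j f) x := by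
    have hf' : ContDiffAt ℝ (j + 1 : ℕ) f x₀ := hf.of_le (mod_cast le_top)
    filter_upwards [hf'.eventually (by simp)] with x hx
    exact hx.differentiableAt_iteratedFDeriv (mod_cast j.lt_succ_self)
  induction N generalizing j with
  | zero => simpa [h0 j] using (hdiff j).self_of_nhds.continuousAt.tendsto
  | succ N ih =>
    obtain ⟨ε, hε, hball⟩ := Metric.eventually_nhds_iff_ball.1 (hdiff j)
    have hderiv : fderiv ℝ (iteratedFDeriv ℝ j f) =o[𝓝 x₀] fun x => ‖x - x₀‖ ^ N :=
      (IsBigO.of_bound' (.of_forall fun _ => norm_fderiv_iteratedFDeriv.le)).trans_isLittleO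
        (ih (j + 1))
    have hmem : x₀ ∈ Metric.ball x₀ ε := Metric.mem_ball_self hε
    have hlim := (convex_ball x₀ ε).isLittleO_pow_succ hmem
      (fun x hx => (hball x hx).hasFDerivAt.hasFDerivWithinAt) (hderiv.mono nhdsWithin_le_nhds)
    simpa only [h0 j, sub_zero, Metric.isOpen_ball.nhdsWithin_eq hmem] using hlim

lemma isFlatAt_of_iteratedFDeriv_eq_zero (hf : ContDiffAt ℝ (⊤ : ℕ∞) f x₀)
    (h0 : ∀ j, iteratedFDeriv ℝ j f x₀ = 0) : IsFlatAt f x₀ := fun N =>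
  .of_norm_left <| by
    simpa only [norm_iteratedFDeriv_zero] using
      (iteratedFDeriv_isLittleO_pow hf h0 N 0).isBigO.norm_left

lemma isFlatAt_of_frequently_eventuallyEq_zero (hf : ContDiffAt ℝ (⊤ : ℕ∞) f x₀)
    (h : ∃ᶠ x in 𝓝 x₀, f =ᶠ[𝓝 x] 0) : IsFlatAt f x₀ := by
  refine isFlatAt_of_iteratedFDeriv_eq_zero hf fun j => ?_
  have hcont : ContinuousAt (iteratedFDeriv ℝ j f) x₀ :=
    (hf.differentiableAt_iteratedFDeriv (mod_cast ENat.natCast_lt_top j)).continuousAt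
  refine of_not_not fun hne => h ?_
  filter_upwards [hcont.eventually_ne hne] with x hx hfx
  exact hx (by simpa using (hfx.iteratedFDeriv ℝ j).self_of_nhds)

end FlatSmooth

/-! ### Cauchy potentials -/

section KernelIntegrals

open Set in
lemma lintegral_Ioo_zero_one_rpow {b : ℝ} (hb : -1 < b) :
    ∫⁻ r in Ioo (0 : ℝ) 1, ENNReal.ofReal (r ^ b) = ENNReal.ofReal (1 / (b + 1)) := by
  have hint := (intervalIntegrable_iff_integrableOn_Ioc_of_le zero_le_one).1
    (intervalIntegral.intervalIntegrable_rpow' (a := 0) (b := 1) hb)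
  have hnonneg : 0 ≤ᵐ[volume.restrict (Ioc (0 : ℝ) 1)] fun r => r ^ b := by
    filter_upwards [ae_restrict_mem measurableSet_Ioc] with r hr using Real.rpow_nonneg hr.1.le _
  rw [setLIntegral_congr Ioo_ae_eq_Ioc, ← ofReal_integral_eq_lintegral_ofReal hint hnonneg,
    ← intervalIntegral.integral_of_le zero_le_one, integral_rpow (Or.inl hb), Real.one_rpow,
    Real.zero_rpow (by linarith), sub_zero]

open Real Set in
lemma lintegral_ball_inv_enorm_rpow {a : ℝ} (ha : a < 2) :
    ∫⁻ w in Metric.ball (0 : ℂ) 1, ‖w‖ₑ⁻¹ ^ a = ENNReal.ofReal (2 * π / (2 - a)) := by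
  have hpolar : EqOn (fun p : ℝ × ℝ => ENNReal.ofReal p.1 • (Metric.ball (0 : ℂ) 1).indicator
        (fun w => ‖w‖ₑ⁻¹ ^ a) (Complex.polarCoord.symm p))
      (fun p => (Ioo 0 1).indicator (fun r => ENNReal.ofReal (r ^ (1 - a))) p.1 * 1)
      (Ioi 0 ×ˢ Ioo (-π) π) := by
    rintro ⟨r, θ⟩ ⟨hr, -⟩
    replace hr : 0 < r := hr
    by_cases hr1 : r < 1
    · have hmem : Complex.polarCoord.symm (r, θ) ∈ Metric.ball (0 : ℂ) 1 := by
        simpa [Complex.norm_polarCoord_symm, abs_of_pos hr] using hr1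
      have hnorm : ‖Complex.polarCoord.symm (r, θ)‖ₑ = ENNReal.ofReal r := by
        rw [← ofReal_norm, Complex.norm_polarCoord_symm, abs_of_pos hr]
      dsimp only
      rw [indicator_of_mem hmem, indicator_of_mem (mem_Ioo.2 ⟨hr, hr1⟩), hnorm, mul_one,
        smul_eq_mul, ENNReal.inv_rpow, ← ENNReal.rpow_neg, ENNReal.ofReal_rpow_of_pos hr,
        ← ENNReal.ofReal_mul hr.le, sub_eq_add_neg, rpow_add hr, rpow_one]
    · have hmem : Complex.polarCoord.symm (r, θ) ∉ Metric.ball (0 : ℂ) 1 := by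
        simpa [Complex.norm_polarCoord_symm, abs_of_pos hr] using hr1
      dsimp only
      rw [indicator_of_notMem hmem, indicator_of_notMem fun h => hr1 h.2, smul_zero, zero_mul]
  have hmeas : AEMeasurable ((Ioo 0 1).indicator fun r => ENNReal.ofReal (r ^ (1 - a)))
      (volume.restrict (Ioi 0)) :=
    (Measurable.indicator (by fun_prop) measurableSet_Ioo).aemeasurable
  rw [← lintegral_indicator Metric.isOpen_ball.measurableSet,
    ← Complex.lintegral_comp_polarCoord_symm, polarCoord_target,
    setLIntegral_congr_fun (measurableSet_Ioi.prod measurableSet_Ioo) hpolar,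
    Measure.volume_eq_prod, ← Measure.prod_restrict, lintegral_prod_mul hmeas aemeasurable_const,
    setLIntegral_indicator measurableSet_Ioo, inter_eq_left.2 Ioo_subset_Ioi_self,
    lintegral_Ioo_zero_one_rpow (by linarith),
    lintegral_one, Measure.restrict_apply_univ, volume_Ioo,
    ← ENNReal.ofReal_mul (one_div_nonneg.2 (by linarith))]
  congr 1
  ring

lemma lintegral_inv_enorm_sub_rpow_le (z : ℂ) (s : Set ℂ) {a : ℝ} (ha0 : 0 ≤ a) (ha2 : a < 2) :
    ∫⁻ ζ in s, ‖z - ζ‖ₑ⁻¹ ^ a ≤ volume s + ENNReal.ofReal (2 * Real.pi / (2 - a)) := by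
  have hnear : ∫⁻ ζ in Metric.ball z 1, ‖z - ζ‖ₑ⁻¹ ^ a =
      ENNReal.ofReal (2 * Real.pi / (2 - a)) := by
    rw [← lintegral_ball_inv_enorm_rpow ha2, ← lintegral_indicator Metric.isOpen_ball.measurableSet,
      ← lintegral_indicator Metric.isOpen_ball.measurableSet,
      ← lintegral_sub_left_eq_self _ z]
    congr with ζ
    simp [Set.indicator, dist_eq_norm]
  have hfar : ∀ ζ ∈ (Metric.ball z 1)ᶜ, ‖z - ζ‖ₑ⁻¹ ^ a ≤ 1 := fun ζ hζ => by
    have : 1 ≤ ‖z - ζ‖ₑ := by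
      rw [← ofReal_norm, ENNReal.one_le_ofReal, ← dist_eq_norm, dist_comm]
      simpa using hζ
    exact ENNReal.rpow_le_one (ENNReal.inv_le_one.2 this) ha0
  rw [← lintegral_inter_add_sdiff _ s (Metric.isOpen_ball (x := z) (ε := 1)).measurableSet,
    add_comm]
  gcongr
  · calc ∫⁻ ζ in s \ Metric.ball z 1, ‖z - ζ‖ₑ⁻¹ ^ a
        ≤ ∫⁻ _ in s \ Metric.ball z 1, 1 :=
          setLIntegral_mono measurable_const fun ζ hζ => hfar ζ hζ.2
      _ ≤ volume s := by simpa using measure_mono Set.sdiff_subset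
  · exact (lintegral_mono_set Set.inter_subset_right).trans hnear.le

lemma lintegral_inv_enorm_sub_le (z : ℂ) (s : Set ℂ) :
    ∫⁻ ζ in s, ‖z - ζ‖ₑ⁻¹ ≤ volume s + ENNReal.ofReal (2 * Real.pi) := by
  have h := lintegral_inv_enorm_sub_rpow_le z s zero_le_one one_lt_two
  rw [show (2 : ℝ) - 1 = 1 by norm_num, div_one] at h
  simpa only [ENNReal.rpow_one] using h

end KernelIntegrals

/-- The potential `∫ F(ζ) / |z - ζ| dv(ζ)`, which dominates the Cauchy transform of every density
bounded by `F`. -/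
noncomputable def cauchyPotential (F : ℂ → ℝ≥0∞) (z : ℂ) : ℝ≥0∞ :=
  ∫⁻ ζ, F ζ * ‖z - ζ‖ₑ⁻¹

section CauchyPotential

variable {F : ℂ → ℝ≥0∞}

@[fun_prop]
lemma measurable_cauchyPotential (hF : Measurable F) : Measurable (cauchyPotential F) :=
  Measurable.lintegral_prod_right' (f := fun p : ℂ × ℂ => F p.2 * ‖p.1 - p.2‖ₑ⁻¹) (by fun_prop)

lemma cauchyPotential_le {M : ℝ≥0∞} {S : Set ℂ} (hM : ∀ ζ, F ζ ≤ M)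
    (hS : Function.support F ⊆ S) (z : ℂ) :
    cauchyPotential F z ≤ M * (volume S + ENNReal.ofReal (2 * Real.pi)) := by
  calc cauchyPotential F z
      = ∫⁻ ζ in S, F ζ * ‖z - ζ‖ₑ⁻¹ :=
        (setLIntegral_eq_of_support_subset fun ζ hζ => hS (left_ne_zero_of_mul hζ)).symm
    _ ≤ ∫⁻ ζ in S, M * ‖z - ζ‖ₑ⁻¹ := by gcongr; exact hM _
    _ = M * ∫⁻ ζ in S, ‖z - ζ‖ₑ⁻¹ := lintegral_const_mul _ (by fun_prop)
    _ ≤ M * (volume S + ENNReal.ofReal (2 * Real.pi)) := by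
        gcongr; exact lintegral_inv_enorm_sub_le z S

lemma setLIntegral_cauchyPotential_le (hF : Measurable F) (s : Set ℂ) :
    ∫⁻ z in s, cauchyPotential F z ≤ (volume s + ENNReal.ofReal (2 * Real.pi)) * ∫⁻ z, F z := by
  have hkernel (ζ : ℂ) : ∫⁻ z in s, ‖z - ζ‖ₑ⁻¹ ≤ volume s + ENNReal.ofReal (2 * Real.pi) := by
    simpa only [enorm_sub_rev ζ] using lintegral_inv_enorm_sub_le ζ s
  calc ∫⁻ z in s, cauchyPotential F z
      = ∫⁻ ζ, F ζ * ∫⁻ z in s, ‖z - ζ‖ₑ⁻¹ := by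
        simp only [cauchyPotential]
        rw [lintegral_lintegral_swap (by fun_prop)]
        exact lintegral_congr fun ζ => lintegral_const_mul _ (by fun_prop)
    _ ≤ ∫⁻ ζ, F ζ * (volume s + ENNReal.ofReal (2 * Real.pi)) := by gcongr; exact hkernel _
    _ = (volume s + ENNReal.ofReal (2 * Real.pi)) * ∫⁻ z, F z := by
        rw [lintegral_mul_const _ hF, mul_comm]

lemma cauchyPotential_sq_le {S : Set ℂ} (hF : Measurable F) (hS : Function.support F ⊆ S) {n : ℕ}
    (hn : n ≠ 0) (z : ℂ) :
    cauchyPotential F z ^ 2 ≤ (∫⁻ ζ, F ζ ^ 2 * ‖z - ζ‖ₑ⁻¹ ^ (n : ℝ)⁻¹) *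
      (volume S + ENNReal.ofReal (2 * Real.pi * n)) := by
  have hn1 : (n : ℝ)⁻¹ ≤ 1 := Nat.cast_inv_le_one n
  have hn0 : 0 < (n : ℝ)⁻¹ := by positivity
  have hkernel : ∫⁻ ζ in S, ‖z - ζ‖ₑ⁻¹ ^ (2 - (n : ℝ)⁻¹) ≤
      volume S + ENNReal.ofReal (2 * Real.pi * n) := by
    have h := lintegral_inv_enorm_sub_rpow_le z S (a := 2 - (n : ℝ)⁻¹) (by linarith) (by linarith)
    rwa [sub_sub_cancel, div_inv_eq_mul] at h
  have hsplit (ζ : ℂ) : F ζ * ‖z - ζ‖ₑ⁻¹ = (F ζ ^ 2 * ‖z - ζ‖ₑ⁻¹ ^ (n : ℝ)⁻¹) ^ (2⁻¹ : ℝ) *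
      (‖z - ζ‖ₑ⁻¹ ^ (2 - (n : ℝ)⁻¹)) ^ (2⁻¹ : ℝ) := by
    rw [ENNReal.mul_rpow_of_nonneg _ _ (by norm_num), ← ENNReal.rpow_mul, ← ENNReal.rpow_mul,
      mul_assoc, ← ENNReal.rpow_add_of_nonneg _ _ (by positivity) (by linarith),
      ← ENNReal.rpow_natCast, ← ENNReal.rpow_mul]
    ring_nf
    simp
  have hsupp : cauchyPotential F z = ∫⁻ ζ in S, F ζ * ‖z - ζ‖ₑ⁻¹ :=
    (setLIntegral_eq_of_support_subset fun ζ hζ => hS (left_ne_zero_of_mul hζ)).symm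
  have hhalf (x : ℝ≥0∞) : (x ^ (2⁻¹ : ℝ)) ^ 2 = x := by
    rw [← ENNReal.rpow_natCast, ← ENNReal.rpow_mul]; simp
  calc cauchyPotential F z ^ 2
      ≤ ((∫⁻ ζ in S, F ζ ^ 2 * ‖z - ζ‖ₑ⁻¹ ^ (n : ℝ)⁻¹) ^ (2⁻¹ : ℝ) *
          (∫⁻ ζ in S, ‖z - ζ‖ₑ⁻¹ ^ (2 - (n : ℝ)⁻¹)) ^ (2⁻¹ : ℝ)) ^ 2 := by
        rw [hsupp]
        simp only [hsplit]
        gcongr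
        exact ENNReal.lintegral_mul_norm_pow_le (by fun_prop) (by fun_prop) (by norm_num)
          (by norm_num) (by norm_num)
    _ = (∫⁻ ζ in S, F ζ ^ 2 * ‖z - ζ‖ₑ⁻¹ ^ (n : ℝ)⁻¹) *
          ∫⁻ ζ in S, ‖z - ζ‖ₑ⁻¹ ^ (2 - (n : ℝ)⁻¹) := by rw [mul_pow, hhalf, hhalf]
    _ ≤ _ := by gcongr; exact Measure.restrict_le_self

lemma lintegral_mul_rpow_inv_pow_le {k : ℂ → ℝ≥0∞} (hF : Measurable F) (hk : Measurable k) {n : ℕ}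
    (hn : n ≠ 0) :
    (∫⁻ ζ, F ζ * k ζ ^ (n : ℝ)⁻¹) ^ n ≤ (∫⁻ ζ, F ζ * k ζ) * (∫⁻ ζ, F ζ) ^ (n - 1) := by
  have hn1 : (n : ℝ)⁻¹ ≤ 1 := Nat.cast_inv_le_one n
  have hn0 : 0 < (n : ℝ)⁻¹ := by positivity
  have hsplit (ζ : ℂ) : F ζ * k ζ ^ (n : ℝ)⁻¹ =
      (F ζ * k ζ) ^ (n : ℝ)⁻¹ * F ζ ^ (1 - (n : ℝ)⁻¹) := by
    rw [ENNReal.mul_rpow_of_nonneg _ _ hn0.le, mul_right_comm,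
      ← ENNReal.rpow_add_of_nonneg _ _ hn0.le (by linarith), add_sub_cancel, ENNReal.rpow_one]
  simp only [hsplit]
  calc _ ≤ ((∫⁻ ζ, F ζ * k ζ) ^ (n : ℝ)⁻¹ * (∫⁻ ζ, F ζ) ^ (1 - (n : ℝ)⁻¹)) ^ n := by
        gcongr
        exact ENNReal.lintegral_mul_norm_pow_le (by fun_prop) (by fun_prop) hn0.le (by linarith)
          (by ring)
    _ = _ := by
        rw [mul_pow, ← ENNReal.rpow_natCast, ← ENNReal.rpow_natCast, ← ENNReal.rpow_mul,
          ← ENNReal.rpow_mul, ← ENNReal.rpow_natCast, inv_mul_cancel₀ (by positivity),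
          ENNReal.rpow_one, sub_mul, inv_mul_cancel₀ (by positivity), one_mul,
          Nat.cast_pred (Nat.pos_of_ne_zero hn)]

lemma setLIntegral_cauchyPotential_pow_le {S : Set ℂ} (hF : Measurable F)
    (hS : Function.support F ⊆ S) (T : Set ℂ) (n : ℕ) :
    ∫⁻ z in T, cauchyPotential F z ^ (2 * n) ≤ (volume T + ENNReal.ofReal (2 * Real.pi)) *
      ((∫⁻ ζ, F ζ ^ 2) * (volume S + ENNReal.ofReal (2 * Real.pi)) * n) ^ n := by
  rcases eq_or_ne n 0 with rfl | hn
  · simp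
  set A := ∫⁻ ζ, F ζ ^ 2
  have hpointwise (z : ℂ) : cauchyPotential F z ^ (2 * n) ≤
      cauchyPotential (fun ζ => F ζ ^ 2) z *
        (A ^ (n - 1) * (volume S + ENNReal.ofReal (2 * Real.pi * n)) ^ n) := by
    calc cauchyPotential F z ^ (2 * n)
        ≤ ((∫⁻ ζ, F ζ ^ 2 * ‖z - ζ‖ₑ⁻¹ ^ (n : ℝ)⁻¹) *
            (volume S + ENNReal.ofReal (2 * Real.pi * n))) ^ n := by
          rw [pow_mul]; gcongr; exact cauchyPotential_sq_le hF hS hn z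
      _ ≤ _ := by
          rw [mul_pow, ← mul_assoc]; gcongr
          exact lintegral_mul_rpow_inv_pow_le (by fun_prop) (by fun_prop) hn
  have hconst : volume S + ENNReal.ofReal (2 * Real.pi * n) ≤
      (volume S + ENNReal.ofReal (2 * Real.pi)) * n := by
    rw [add_mul, ENNReal.ofReal_mul (by positivity), ENNReal.ofReal_natCast]
    gcongr
    exact le_mul_of_one_le_right' (by exact_mod_cast Nat.one_le_iff_ne_zero.2 hn)
  calc ∫⁻ z in T, cauchyPotential F z ^ (2 * n)
      ≤ ∫⁻ z in T, cauchyPotential (fun ζ => F ζ ^ 2) z *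
          (A ^ (n - 1) * (volume S + ENNReal.ofReal (2 * Real.pi * n)) ^ n) := by
        gcongr; exact hpointwise _
    _ = (∫⁻ z in T, cauchyPotential (fun ζ => F ζ ^ 2) z) *
          (A ^ (n - 1) * (volume S + ENNReal.ofReal (2 * Real.pi * n)) ^ n) :=
        lintegral_mul_const _ (by fun_prop)
    _ ≤ ((volume T + ENNReal.ofReal (2 * Real.pi)) * A) *
          (A ^ (n - 1) * ((volume S + ENNReal.ofReal (2 * Real.pi)) * n) ^ n) := by
        gcongr
        exact setLIntegral_cauchyPotential_le (by fun_prop) T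
    _ = _ := by
        rw [mul_assoc A, mul_pow A, ← mul_pow_sub_one hn A]
        ring

lemma exp_coe_le_two_mul_tsum (x : ℝ≥0∞) :
    EReal.exp x ≤ 2 * ∑' n : ℕ, x ^ (2 * n) / (2 * n).factorial := by
  rcases eq_or_ne x ⊤ with rfl | hx
  · have h : (⊤ : ℝ≥0∞) ≤ ∑' n : ℕ, (⊤ : ℝ≥0∞) ^ (2 * n) / (2 * n).factorial := by
      refine le_trans ?_ (ENNReal.le_tsum 1)
      simp [ENNReal.top_div]
    simp [top_le_iff.1 h]
  lift x to NNReal using hx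
  have hcosh := Real.hasSum_cosh (x : ℝ)
  have hterm (n : ℕ) : (x : ℝ≥0∞) ^ (2 * n) / (2 * n).factorial =
      ENNReal.ofReal ((x : ℝ) ^ (2 * n) / (2 * n).factorial) := by
    rw [ENNReal.ofReal_div_of_pos (by positivity), ENNReal.ofReal_pow (by positivity),
      ENNReal.ofReal_coe_nnreal, ENNReal.ofReal_natCast]
  simp only [hterm]
  rw [← ENNReal.ofReal_tsum_of_nonneg (fun n => by positivity) hcosh.summable, hcosh.tsum_eq,
    ← ENNReal.ofReal_ofNat 2, ← ENNReal.ofReal_mul zero_le_two]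
  change ENNReal.ofReal (Real.exp x) ≤ _
  gcongr
  rw [Real.cosh_eq]
  linarith [Real.exp_pos (-(x : ℝ))]

lemma mul_natCast_pow_div_factorial_le {b : ℝ} (hb : 0 ≤ b) (n : ℕ) :
    (b * n) ^ n / (2 * n).factorial ≤ b ^ n / n.factorial := by
  have hfact : (n : ℝ) ^ n * n.factorial ≤ (2 * n).factorial := by
    have h : n.factorial * (n + 1) ^ n ≤ (2 * n).factorial :=
      two_mul n ▸ Nat.factorial_mul_pow_le_factorial
    calc (n : ℝ) ^ n * n.factorial ≤ (n + 1) ^ n * n.factorial := by gcongr; linarith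
      _ ≤ (2 * n).factorial := by rw [mul_comm]; exact_mod_cast h
  rw [div_le_div_iff₀ (by positivity) (by positivity), mul_pow, mul_assoc]
  gcongr

lemma setLIntegral_exp_cauchyPotential_lt_top {S T : Set ℂ} (hF : Measurable F)
    (hS : Function.support F ⊆ S) (hSfin : volume S ≠ ⊤) (hTfin : volume T ≠ ⊤)
    (hF2 : ∫⁻ ζ, F ζ ^ 2 ≠ ⊤) :
    ∫⁻ z in T, EReal.exp (cauchyPotential F z) < ⊤ := by
  -- The moment of order `2 n` is at most `L (B n)ⁿ`, which is summable against `1 / (2 n)!`.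
  set L := volume T + ENNReal.ofReal (2 * Real.pi)
  set B := (∫⁻ ζ, F ζ ^ 2) * (volume S + ENNReal.ofReal (2 * Real.pi))
  have hL : L ≠ ⊤ := by finiteness
  have hB : B ≠ ⊤ := by finiteness
  have hterm (n : ℕ) : ∫⁻ z in T, cauchyPotential F z ^ (2 * n) / (2 * n).factorial ≤
      L * ENNReal.ofReal (B.toReal ^ n / n.factorial) := by
    calc ∫⁻ z in T, cauchyPotential F z ^ (2 * n) / (2 * n).factorial
        = (∫⁻ z in T, cauchyPotential F z ^ (2 * n)) / (2 * n).factorial := by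
          simp only [div_eq_mul_inv]; exact lintegral_mul_const _ (by fun_prop)
      _ ≤ L * (B * n) ^ n / (2 * n).factorial := by
          gcongr; exact setLIntegral_cauchyPotential_pow_le hF hS T n
      _ = L * ENNReal.ofReal ((B.toReal * n) ^ n / (2 * n).factorial) := by
          rw [mul_div_assoc, ENNReal.ofReal_div_of_pos (by positivity),
            ENNReal.ofReal_pow (by positivity), ENNReal.ofReal_mul (by positivity),
            ENNReal.ofReal_toReal hB, ENNReal.ofReal_natCast, ENNReal.ofReal_natCast]
      _ ≤ _ := by
          gcongr L * ENNReal.ofReal ?_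
          exact mul_natCast_pow_div_factorial_le (by positivity) n
  have hsum : ∑' n : ℕ, ENNReal.ofReal (B.toReal ^ n / n.factorial) ≠ ⊤ := by
    rw [← ENNReal.ofReal_tsum_of_nonneg (fun n => by positivity)
      (Real.summable_pow_div_factorial _)]
    exact ENNReal.ofReal_ne_top
  calc ∫⁻ z in T, EReal.exp (cauchyPotential F z)
      ≤ ∫⁻ z in T, 2 * ∑' n : ℕ, cauchyPotential F z ^ (2 * n) / (2 * n).factorial := by
        gcongr; exact exp_coe_le_two_mul_tsum _
    _ = 2 * ∑' n : ℕ, ∫⁻ z in T, cauchyPotential F z ^ (2 * n) / (2 * n).factorial := by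
        rw [lintegral_const_mul _ (by fun_prop), lintegral_tsum (by fun_prop)]
    _ ≤ 2 * ∑' n : ℕ, L * ENNReal.ofReal (B.toReal ^ n / n.factorial) := by
        gcongr; exact hterm _
    _ < ⊤ := by
        rw [ENNReal.tsum_mul_left]
        finiteness

end CauchyPotential

/-! ### The Cauchy transform -/

section CauchyPompeiu

variable {h : ℂ → ℂ}

lemma integral_Ioi_fderiv_smul (hh : ContDiff ℝ 1 h) (hc : HasCompactSupport h) {v : ℂ}
    (hv : v ≠ 0) : ∫ r : ℝ in Set.Ioi 0, fderiv ℝ h (r • v) v = -h 0 := by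
  have hray : HasCompactSupport fun r : ℝ => h (r • v) :=
    hc.comp_isClosedEmbedding (isClosedEmbedding_smul_left hv)
  have hderiv (r : ℝ) : deriv (fun r : ℝ => h (r • v)) r = fderiv ℝ h (r • v) v := by
    have hline : HasDerivAt (fun r : ℝ => r • v) v r := by
      simpa using (hasDerivAt_id r).smul_const v
    exact (((hh.differentiable one_ne_zero) _).hasFDerivAt.comp_hasDerivAt r hline).deriv
  have hint := HasCompactSupport.integral_Ioi_deriv_eq (f := fun r : ℝ => h (r • v))
    (by fun_prop) hray 0
  simpa only [hderiv, zero_smul] using hint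

lemma integral_fderiv_circle (hh : ContDiff ℝ 1 h) {r : ℝ} (hr : r ≠ 0) :
    ∫ θ in Set.Ioo (-Real.pi) Real.pi, fderiv ℝ h (r • Complex.exp (θ * Complex.I))
      (Complex.I * Complex.exp (θ * Complex.I)) = 0 := by
  have hcircle (θ : ℝ) : HasDerivAt (fun θ : ℝ => r • Complex.exp (θ * Complex.I))
      (r • (Complex.I * Complex.exp (θ * Complex.I))) θ := by
    have hexp : HasDerivAt (fun θ : ℝ => Complex.exp (θ * Complex.I))
        (Complex.exp (θ * Complex.I) * (1 * Complex.I)) θ :=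
      ((Complex.ofRealCLM.hasDerivAt (x := θ)).mul_const Complex.I).cexp
    rw [mul_comm Complex.I]
    simpa only [one_mul] using hexp.fun_const_smul r
  have hcont : Continuous fun θ : ℝ => fderiv ℝ h (r • Complex.exp (θ * Complex.I))
      (Complex.I * Complex.exp (θ * Complex.I)) := by
    have := hh.continuous_fderiv one_ne_zero
    fun_prop
  have hint := intervalIntegral.integral_eq_sub_of_hasDerivAt (a := -Real.pi) (b := Real.pi)
    (fun θ _ => ((hh.differentiable one_ne_zero) _).hasFDerivAt.comp_hasDerivAt θ (hcircle θ))
    (by simpa only [map_smul] using (hcont.fun_const_smul r).intervalIntegrable _ _)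
  simp only [map_smul, intervalIntegral.integral_smul] at hint
  rw [← integral_Ioc_eq_integral_Ioo, ← intervalIntegral.integral_of_le (by linarith [Real.pi_pos])]
  refine (smul_eq_zero_iff_right hr).1 (hint.trans ?_)
  simp [Complex.exp_neg]

lemma integrableOn_fderiv_polar (hh : ContDiff ℝ 1 h) (hc : HasCompactSupport h) {v : ℝ → ℂ}
    (hv : Continuous v) :
    IntegrableOn (fun p : ℝ × ℝ => fderiv ℝ h (p.1 • Complex.exp (p.2 * Complex.I)) (v p.2))
      (Set.Ioi 0 ×ˢ Set.Ioo (-Real.pi) Real.pi) := by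
  obtain ⟨R, hR⟩ := (hc.fderiv (𝕜 := ℝ)).isBounded.subset_closedBall 0
  have hcont : Continuous fun p : ℝ × ℝ =>
      fderiv ℝ h (p.1 • Complex.exp (p.2 * Complex.I)) (v p.2) := by
    have := hh.continuous_fderiv one_ne_zero
    fun_prop
  refine (hcont.continuousOn.integrableOn_compact (isCompact_Icc.prod isCompact_Icc) :
    IntegrableOn _ (Set.Icc 0 R ×ˢ Set.Icc (-Real.pi) Real.pi)).of_forall_sdiff_eq_zero
      (measurableSet_Ioi.prod measurableSet_Ioo) ?_
  rintro ⟨r, θ⟩ ⟨⟨hr, hθ⟩, hout⟩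
  have hrR : R < r := by
    by_contra! hle
    exact hout ⟨⟨(show 0 < r from hr).le, hle⟩, Set.Ioo_subset_Icc_self hθ⟩
  have hnotMem : r • Complex.exp (θ * Complex.I) ∉ tsupport (fderiv ℝ h) := fun hmem => by
    have := hR hmem
    rw [mem_closedBall_zero_iff, norm_smul, Complex.norm_exp_ofReal_mul_I, mul_one,
      Real.norm_of_nonneg (le_of_lt hr)] at this
    exact this.not_gt hrR
  simp only [image_eq_zero_of_notMem_tsupport hnotMem, _root_.zero_apply]

lemma setIntegral_fderiv_polar_radial (hh : ContDiff ℝ 1 h) (hc : HasCompactSupport h) :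
    ∫ p in Set.Ioi (0 : ℝ) ×ˢ Set.Ioo (-Real.pi) Real.pi,
      fderiv ℝ h (p.1 • Complex.exp (p.2 * Complex.I)) (Complex.exp (p.2 * Complex.I)) =
        -(2 * Real.pi * h 0) := by
  have hint := integrableOn_fderiv_polar hh hc (v := fun θ => Complex.exp (θ * Complex.I))
    (by fun_prop)
  rw [IntegrableOn, Measure.volume_eq_prod, ← Measure.prod_restrict] at hint
  rw [Measure.volume_eq_prod, ← Measure.prod_restrict, integral_prod_symm _ hint]
  calc ∫ θ in Set.Ioo (-Real.pi) Real.pi, ∫ r in Set.Ioi (0 : ℝ),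
        fderiv ℝ h (r • Complex.exp (θ * Complex.I)) (Complex.exp (θ * Complex.I))
      = ∫ _ in Set.Ioo (-Real.pi) Real.pi, -h 0 := by
        exact integral_congr_ae (.of_forall fun θ =>
          integral_Ioi_fderiv_smul hh hc (Complex.exp_ne_zero _))
    _ = -(2 * Real.pi * h 0) := by
        rw [setIntegral_const, Real.volume_real_Ioo_of_le (neg_le_self Real.pi_pos.le),
          Complex.real_smul]
        push_cast
        ring

lemma setIntegral_fderiv_polar_angular (hh : ContDiff ℝ 1 h) (hc : HasCompactSupport h) :
    ∫ p in Set.Ioi (0 : ℝ) ×ˢ Set.Ioo (-Real.pi) Real.pi,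
      fderiv ℝ h (p.1 • Complex.exp (p.2 * Complex.I))
        (Complex.I * Complex.exp (p.2 * Complex.I)) = 0 := by
  have hint := integrableOn_fderiv_polar hh hc
    (v := fun θ => Complex.I * Complex.exp (θ * Complex.I)) (by fun_prop)
  rw [Measure.volume_eq_prod] at hint ⊢
  rw [setIntegral_prod _ hint]
  exact setIntegral_eq_zero_of_forall_eq_zero fun r hr => integral_fderiv_circle hh (ne_of_gt hr)

lemma integral_wirtingerDBar_mul_inv (hh : ContDiff ℝ 1 h) (hc : HasCompactSupport h) :
    ∫ w, wirtingerDBar h w * w⁻¹ = -(Real.pi * h 0) := by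
  have hpolar (p : ℝ × ℝ) (hp : p ∈ Set.Ioi (0 : ℝ) ×ˢ Set.Ioo (-Real.pi) Real.pi) :
      p.1 • (wirtingerDBar h (Complex.polarCoord.symm p) * (Complex.polarCoord.symm p)⁻¹) =
        (fderiv ℝ h (p.1 • Complex.exp (p.2 * Complex.I)) (Complex.exp (p.2 * Complex.I)) +
          Complex.I * fderiv ℝ h (p.1 • Complex.exp (p.2 * Complex.I))
            (Complex.I * Complex.exp (p.2 * Complex.I))) / 2 := by
    have hsymm : Complex.polarCoord.symm p = p.1 • Complex.exp (p.2 * Complex.I) := by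
      rw [Complex.polarCoord_symm_apply, Complex.exp_mul_I, Complex.real_smul, Complex.ofReal_cos,
        Complex.ofReal_sin]
    have hr : (p.1 : ℂ) ≠ 0 := by exact_mod_cast ne_of_gt (show 0 < p.1 from hp.1)
    have hconj : conj (Complex.exp (p.2 * Complex.I)) = (Complex.exp (p.2 * Complex.I))⁻¹ := by
      rw [← Complex.exp_neg, ← Complex.exp_conj]
      simp
    rw [fderiv_apply_add_I_mul_fderiv_apply, hsymm, hconj, Complex.real_smul, Complex.real_smul]
    field_simp
  have hradial := integrableOn_fderiv_polar hh hc (v := fun θ => Complex.exp (θ * Complex.I))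
    (by fun_prop)
  have hangular := integrableOn_fderiv_polar hh hc
    (v := fun θ => Complex.I * Complex.exp (θ * Complex.I)) (by fun_prop)
  rw [← Complex.integral_comp_polarCoord_symm, polarCoord_target,
    setIntegral_congr_fun (measurableSet_Ioi.prod measurableSet_Ioo) hpolar, integral_div,
    integral_add hradial (hangular.const_mul _), integral_const_mul,
    setIntegral_fderiv_polar_radial hh hc, setIntegral_fderiv_polar_angular hh hc]
  ring

end CauchyPompeiu

/-- The Cauchy transform `(1/π) ∫ ψ(ζ) / (z - ζ) dv(ζ)`, the solution of `∂̄w = ψ` given by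
convolution with the fundamental solution `1 / (π z)` of `∂̄`. -/
noncomputable def cauchyTransform (ψ : ℂ → ℂ) (z : ℂ) : ℂ :=
  (Real.pi : ℂ)⁻¹ * ∫ ζ, ψ ζ * (z - ζ)⁻¹

section CauchyTransform

variable {ψ h : ℂ → ℂ}

lemma cauchyTransform_wirtingerDBar (hh : ContDiff ℝ 1 h) (hc : HasCompactSupport h) (z : ℂ) :
    cauchyTransform (wirtingerDBar h) z = h z := by
  have hshift (w : ℂ) : wirtingerDBar (fun w => h (z + w)) w = wirtingerDBar h (z + w) := by
    simp only [wirtingerDBar, fderiv_comp_add_left]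
  have hpompeiu := integral_wirtingerDBar_mul_inv (h := fun w => h (z + w)) (by fun_prop)
    (hc.comp_homeomorph (Homeomorph.addLeft z))
  simp only [hshift, add_zero] at hpompeiu
  have hpi : (Real.pi : ℂ) ≠ 0 := by exact_mod_cast Real.pi_ne_zero
  rw [cauchyTransform, ← integral_add_left_eq_self _ z]
  simp only [sub_add_cancel_left, inv_neg, mul_neg, integral_neg, hpompeiu, neg_neg]
  field_simp

lemma locallyIntegrable_inv : LocallyIntegrable fun z : ℂ => z⁻¹ :=
  locallyIntegrable_of_norm_le_rpow (C := 1) (α := 1) (by simp) (by simp)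
    (.of_forall fun z => by simp [Real.rpow_neg_one]) (by fun_prop)

lemma cauchyTransform_eq_convolution (ψ : ℂ → ℂ) :
    cauchyTransform ψ = fun z => (Real.pi : ℂ)⁻¹ *
      ((fun z : ℂ => z⁻¹) ⋆[ContinuousLinearMap.mul ℝ ℂ, volume] ψ) z := by
  funext z
  rw [cauchyTransform, convolution_eq_swap]
  simp only [ContinuousLinearMap.mul_apply', mul_comm]

lemma contDiff_cauchyTransform {n : ℕ∞} (hψ : ContDiff ℝ n ψ) (hc : HasCompactSupport ψ) :
    ContDiff ℝ n (cauchyTransform ψ) := by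
  rw [cauchyTransform_eq_convolution]
  exact contDiff_const.mul (hc.contDiff_convolution_right _ locallyIntegrable_inv hψ)

lemma wirtingerDBar_cauchyTransform (hψ : ContDiff ℝ 1 ψ) (hc : HasCompactSupport ψ) :
    wirtingerDBar (cauchyTransform ψ) = ψ := by
  funext z
  have hcont := hψ.continuous_fderiv one_ne_zero
  have hderiv := (hc.hasFDerivAt_convolution_right (ContinuousLinearMap.mul ℝ ℂ)
    locallyIntegrable_inv hψ z).const_mul (Real.pi : ℂ)⁻¹
  have happly (v : ℂ) : ((fun z : ℂ => z⁻¹) ⋆[(ContinuousLinearMap.mul ℝ ℂ).precompR ℂ, volume]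
      fderiv ℝ ψ) z v = ∫ ζ, (z - ζ)⁻¹ * fderiv ℝ ψ ζ v :=
    (convolution_precompR_apply (ContinuousLinearMap.mul ℝ ℂ) locallyIntegrable_inv
      (hc.fderiv (𝕜 := ℝ)) hcont z v).trans (convolution_eq_swap _)
  have hint (v : ℂ) : Integrable fun ζ => (z - ζ)⁻¹ * fderiv ℝ ψ ζ v :=
    ((hc.fderiv_apply (𝕜 := ℝ) v).convolutionExists_right (ContinuousLinearMap.mul ℝ ℂ)
      locallyIntegrable_inv (by fun_prop) z).integrable_swap
  rw [← cauchyTransform_eq_convolution] at hderiv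
  rw [wirtingerDBar_eq_of_hasFDerivAt hderiv, ← cauchyTransform_wirtingerDBar hψ hc z]
  simp only [_root_.smul_apply, happly, smul_eq_mul, cauchyTransform, wirtingerDBar]
  rw [mul_left_comm, ← mul_add, mul_div_assoc, ← integral_const_mul, ← integral_add (hint _)
    ((hint _).const_mul _), ← integral_div]
  congr 2 with ζ
  ring

lemma enorm_inv_le {𝕜 : Type*} [NormedDivisionRing 𝕜] (x : 𝕜) : ‖x⁻¹‖ₑ ≤ ‖x‖ₑ⁻¹ := by
  obtain rfl | hx := eq_or_ne x 0
  · simp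
  · exact (enorm_inv hx).le

lemma enorm_cauchyTransform_le {F : ℂ → ℝ≥0∞} (hF : ∀ ζ, ‖ψ ζ‖ₑ ≤ F ζ) (z : ℂ) :
    ‖cauchyTransform ψ z‖ₑ ≤ cauchyPotential F z := by
  have hpi : ‖(Real.pi : ℂ)⁻¹‖ₑ ≤ 1 := by
    rw [← enorm_one (G := ℂ), enorm_le_iff_norm_le, norm_inv, norm_one, Complex.norm_real,
      Real.norm_of_nonneg Real.pi_pos.le]
    exact inv_le_one_of_one_le₀ (by linarith [Real.pi_gt_three])
  calc ‖cauchyTransform ψ z‖ₑ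
      = ‖(Real.pi : ℂ)⁻¹‖ₑ * ‖∫ ζ, ψ ζ * (z - ζ)⁻¹‖ₑ := enorm_mul _ _
    _ ≤ 1 * ∫⁻ ζ, ‖ψ ζ * (z - ζ)⁻¹‖ₑ := by gcongr; exact enorm_integral_le_lintegral_enorm _
    _ ≤ cauchyPotential F z := by
        rw [one_mul]
        refine lintegral_mono fun ζ => ?_
        rw [enorm_mul]
        exact mul_le_mul' (hF ζ) (enorm_inv_le _)

end CauchyTransform

/-! ### Flat densities and the order of vanishing -/

section FlatDensity

variable {ψ : ℂ → ℂ} {z z₀ : ℂ}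

lemma integrable_mul_inv_sub (hψ : AEStronglyMeasurable ψ)
    (hz : cauchyPotential (fun ζ => ‖ψ ζ‖ₑ) z ≠ ⊤) : Integrable fun ζ => ψ ζ * (z - ζ)⁻¹ := by
  refine ⟨by fun_prop, (lintegral_mono fun ζ => ?_).trans_lt hz.lt_top⟩
  rw [enorm_mul]
  exact mul_le_mul_right (enorm_inv_le _) _

lemma cauchyTransform_eq_add (hψ : AEStronglyMeasurable ψ)
    (hz : cauchyPotential (fun ζ => ‖ψ ζ‖ₑ) z ≠ ⊤)
    (hz₀ : cauchyPotential (fun ζ => ‖ψ ζ‖ₑ) z₀ ≠ ⊤) :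
    cauchyTransform ψ z =
      cauchyTransform ψ z₀ + (z - z₀) * cauchyTransform (fun ζ => ψ ζ * (ζ - z₀)⁻¹) z := by
  have hkernel : ∀ᵐ ζ, ψ ζ * (z - ζ)⁻¹ - ψ ζ * (z₀ - ζ)⁻¹ =
      (z - z₀) * (ψ ζ * (ζ - z₀)⁻¹ * (z - ζ)⁻¹) := by
    filter_upwards [Measure.ae_ne volume z, Measure.ae_ne volume z₀] with ζ hζ hζ₀
    have h : z - ζ ≠ 0 := sub_ne_zero.2 hζ.symm
    have h₀ : ζ - z₀ ≠ 0 := sub_ne_zero.2 hζ₀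
    rw [← neg_sub ζ z₀, inv_neg]
    field_simp
    ring
  rw [← sub_eq_iff_eq_add', cauchyTransform, cauchyTransform, cauchyTransform, ← mul_sub,
    ← integral_sub (integrable_mul_inv_sub hψ hz) (integrable_mul_inv_sub hψ hz₀),
    integral_congr_ae hkernel, integral_const_mul]
  ring

/-- The density `ψ(ζ) / (ζ - z₀)ᵏ`, whose Cauchy transform at `z₀` is the `k`-th Taylor
coefficient at `z₀` of the Cauchy transform of `ψ`. -/
noncomputable def divPow (ψ : ℂ → ℂ) (z₀ : ℂ) (k : ℕ) (ζ : ℂ) : ℂ :=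
  ψ ζ * ((ζ - z₀)⁻¹) ^ k

lemma exists_norm_divPow_le (hflat : IsGloballyFlatAt ψ z₀) (k : ℕ) :
    ∃ M, ∀ ζ, ‖divPow ψ z₀ k ζ‖ ≤ M := by
  obtain ⟨M, hM⟩ := hflat k
  refine ⟨|M|, fun ζ => ?_⟩
  calc ‖divPow ψ z₀ k ζ‖ = ‖ψ ζ‖ * (‖ζ - z₀‖ ^ k)⁻¹ := by simp [divPow]
    _ ≤ |M| * ‖ζ - z₀‖ ^ k * (‖ζ - z₀‖ ^ k)⁻¹ := by
      gcongr
      exact (hM ζ).trans (by gcongr; exact le_abs_self M)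
    _ ≤ |M| := mul_inv_le_of_le_mul₀ (by positivity) (abs_nonneg M) le_rfl

lemma exists_cauchyPotential_divPow_le (hsupp : volume (Function.support ψ) ≠ ⊤)
    (hflat : IsGloballyFlatAt ψ z₀) (k : ℕ) :
    ∃ B : ℝ≥0∞, B ≠ ⊤ ∧ ∀ z, cauchyPotential (fun ζ => ‖divPow ψ z₀ k ζ‖ₑ) z ≤ B := by
  obtain ⟨M, hM⟩ := exists_norm_divPow_le hflat k
  have hM' (ζ : ℂ) : ‖divPow ψ z₀ k ζ‖ₑ ≤ ENNReal.ofReal M := by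
    rw [← ofReal_norm]
    exact ENNReal.ofReal_le_ofReal (hM ζ)
  exact ⟨_, by finiteness,
    cauchyPotential_le hM' fun ζ hζ => left_ne_zero_of_mul (enorm_ne_zero.1 hζ)⟩

lemma cauchyTransform_divPow_eq_add (hψ : AEStronglyMeasurable ψ)
    (hsupp : volume (Function.support ψ) ≠ ⊤)
    (hflat : IsGloballyFlatAt ψ z₀) (k : ℕ) (z : ℂ) :
    cauchyTransform (divPow ψ z₀ k) z = cauchyTransform (divPow ψ z₀ k) z₀ +
      (z - z₀) * cauchyTransform (divPow ψ z₀ (k + 1)) z := by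
  obtain ⟨B, hB, hle⟩ := exists_cauchyPotential_divPow_le hsupp hflat k
  have hsucc : divPow ψ z₀ (k + 1) = fun ζ => divPow ψ z₀ k ζ * (ζ - z₀)⁻¹ := by
    funext ζ
    rw [divPow, divPow, pow_succ, mul_assoc]
  rw [hsucc]
  refine cauchyTransform_eq_add ?_ (ne_top_of_le_ne_top hB (hle z))
    (ne_top_of_le_ne_top hB (hle z₀))
  unfold divPow
  fun_prop

lemma cauchyTransform_eq_pow_mul (hψ : AEStronglyMeasurable ψ)
    (hsupp : volume (Function.support ψ) ≠ ⊤)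
    (hflat : IsGloballyFlatAt ψ z₀) {k : ℕ}
    (hzero : ∀ j < k, cauchyTransform (divPow ψ z₀ j) z₀ = 0) (z : ℂ) :
    cauchyTransform ψ z = (z - z₀) ^ k * cauchyTransform (divPow ψ z₀ k) z := by
  induction k with
  | zero =>
    have hdivPow : divPow ψ z₀ 0 = ψ := funext fun ζ => by simp [divPow]
    rw [hdivPow, pow_zero, one_mul]
  | succ k ih =>
    rw [ih fun j hj => hzero j (by lia), cauchyTransform_divPow_eq_add hψ hsupp hflat,
      hzero k k.lt_succ_self, zero_add, pow_succ, mul_assoc]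

lemma isBigO_cauchyTransform_divPow (hsupp : volume (Function.support ψ) ≠ ⊤)
    (hflat : IsGloballyFlatAt ψ z₀) (k : ℕ) :
    cauchyTransform (divPow ψ z₀ k) =O[𝓝 z₀] fun _ => (1 : ℝ) := by
  obtain ⟨B, hB, hle⟩ := exists_cauchyPotential_divPow_le hsupp hflat k
  refine IsBigO.of_bound B.toReal (.of_forall fun z => ?_)
  rw [norm_one, mul_one, ← toReal_enorm]
  exact ENNReal.toReal_mono hB ((enorm_cauchyTransform_le (fun _ => le_rfl) z).trans (hle z))

lemma tendsto_cauchyTransform_divPow (hψ : AEStronglyMeasurable ψ)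
    (hsupp : volume (Function.support ψ) ≠ ⊤)
    (hflat : IsGloballyFlatAt ψ z₀) (k : ℕ) :
    Tendsto (cauchyTransform (divPow ψ z₀ k)) (𝓝 z₀)
      (𝓝 (cauchyTransform (divPow ψ z₀ k) z₀)) := by
  have hbdd := (isBigO_cauchyTransform_divPow hsupp hflat (k + 1)).isBoundedUnder_le
  have hsub : Tendsto (fun z => z - z₀) (𝓝 z₀) (𝓝 0) := tendsto_sub_nhds_zero_iff.2 tendsto_id
  have hlim := (hsub.zero_mul_isBoundedUnder_le hbdd).const_add
    (cauchyTransform (divPow ψ z₀ k) z₀)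
  rw [add_zero] at hlim
  exact hlim.congr fun z => (cauchyTransform_divPow_eq_add hψ hsupp hflat k z).symm

lemma isFlatAt_or_isBigO_cauchyTransform (hψ : AEStronglyMeasurable ψ)
    (hsupp : volume (Function.support ψ) ≠ ⊤)
    (hflat : IsGloballyFlatAt ψ z₀) :
    IsFlatAt (cauchyTransform ψ) z₀ ∨
      ∃ k : ℕ, (fun z => ‖z - z₀‖ ^ k) =O[𝓝 z₀] cauchyTransform ψ := by
  have hpow (k : ℕ) : (fun z => (z - z₀) ^ k) =Θ[𝓝 z₀] fun z => ‖z - z₀‖ ^ k := by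
    simpa only [norm_pow] using isTheta_norm_right.2 (isTheta_refl (fun z => (z - z₀) ^ k) (𝓝 z₀))
  by_cases! hcoeff : ∀ k, cauchyTransform (divPow ψ z₀ k) z₀ = 0
  · left
    intro N
    rw [funext (cauchyTransform_eq_pow_mul hψ hsupp hflat fun j _ => hcoeff j)]
    simpa only [mul_one] using (hpow N).isBigO.mul (isBigO_cauchyTransform_divPow hsupp hflat N)
  · right
    classical
    set k := Nat.find hcoeff
    have hmin (j : ℕ) (hj : j < k) : cauchyTransform (divPow ψ z₀ j) z₀ = 0 :=
      not_not.1 (Nat.find_min hcoeff hj)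
    have hone : (fun _ => (1 : ℝ)) =O[𝓝 z₀] cauchyTransform (divPow ψ z₀ k) :=
      (isBigO_const_const 1 (Nat.find_spec hcoeff) _).trans
        ((isEquivalent_const_iff_tendsto (Nat.find_spec hcoeff)).2
          (tendsto_cauchyTransform_divPow hψ hsupp hflat k)).isBigO_symm
    refine ⟨k, ?_⟩
    rw [funext (cauchyTransform_eq_pow_mul hψ hsupp hflat hmin)]
    simpa only [mul_one] using (hpow k).isBigO_symm.mul hone

end FlatDensity

section FiniteOrder

variable {f : ℂ → ℂ} {z₀ : ℂ}

lemma isFlatAt_or_isBigO (hf : ContDiffAt ℝ 1 f z₀) (hflat : IsFlatAt (wirtingerDBar f) z₀) :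
    IsFlatAt f z₀ ∨ ∃ k : ℕ, (fun z => ‖z - z₀‖ ^ k) =O[𝓝 z₀] f := by
  obtain ⟨g, hg, hc, hgf⟩ := exists_contDiff_hasCompactSupport_eventuallyEq (n := 1) hf
  have hcont : Continuous (wirtingerDBar g) := continuous_wirtingerDBar hg
  have hsupp := hasCompactSupport_wirtingerDBar hc
  obtain ⟨B, hB⟩ := hsupp.exists_bound_of_continuous hcont
  have hgflat : IsFlatAt (wirtingerDBar g) z₀ := hflat.congr <|
    hgf.eventuallyEq_nhds.mono fun z hz => (wirtingerDBar_congr hz).symm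
  have hdich := isFlatAt_or_isBigO_cauchyTransform hcont.aestronglyMeasurable
    ((measure_mono subset_closure).trans_lt hsupp.isCompact.measure_lt_top).ne
    (hgflat.isGloballyFlatAt hB)
  rw [funext (cauchyTransform_wirtingerDBar hg hc)] at hdich
  exact hdich.imp (fun h => h.congr hgf) fun ⟨k, hk⟩ => ⟨k, hk.congr' .rfl hgf⟩

lemma volume_real_ball (z : ℂ) {r : ℝ} (hr : 0 ≤ r) :
    volume.real (Metric.ball z r) = Real.pi * r ^ 2 := by
  simp [Measure.real, Complex.volume_ball, hr, mul_comm]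

lemma setIntegral_ball_norm_sq_le {C ε r : ℝ} {N : ℕ} (hr : 0 ≤ r) (hrε : r ≤ ε)
    (hC : ∀ z ∈ Metric.ball z₀ ε, ‖f z‖ ≤ C * ‖‖z - z₀‖ ^ N‖) :
    ∫ z in Metric.ball z₀ r, ‖f z‖ ^ 2 ≤ (C * r ^ N) ^ 2 * (Real.pi * r ^ 2) := by
  rw [← volume_real_ball z₀ hr]
  refine (le_abs_self _).trans ?_
  rw [← Real.norm_eq_abs]
  refine norm_setIntegral_le_of_norm_le_const measure_ball_lt_top fun z hz => ?_
  have hfz : ‖f z‖ ≤ |C| * r ^ N := calc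
    ‖f z‖ ≤ C * ‖z - z₀‖ ^ N := by
      simpa only [norm_pow, norm_norm] using hC z (Metric.ball_subset_ball hrε hz)
    _ ≤ |C| * r ^ N := by
      gcongr
      · exact le_abs_self C
      · exact (mem_ball_iff_norm.1 hz).le
  calc ‖‖f z‖ ^ 2‖ = ‖f z‖ ^ 2 := by rw [norm_pow, norm_norm]
    _ ≤ (|C| * r ^ N) ^ 2 := by gcongr
    _ = (C * r ^ N) ^ 2 := by rw [mul_pow, mul_pow, sq_abs]

lemma IsFlatAt.vanishesInfiniteOrder (hf : IsFlatAt f z₀) : VanishesInfiniteOrder f z₀ := by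
  intro m _
  obtain ⟨N, hN⟩ := exists_nat_ge m
  obtain ⟨C, hC⟩ := (hf N).bound
  obtain ⟨ε, hε, hball⟩ := Metric.eventually_nhds_iff_ball.1 hC
  have hlim : Tendsto (fun r : ℝ => C ^ 2 * Real.pi * r ^ 2) (𝓝[>] 0) (𝓝 0) := by
    have hcont : Continuous fun r : ℝ => C ^ 2 * Real.pi * r ^ 2 := by fun_prop
    simpa using (hcont.tendsto 0).mono_left nhdsWithin_le_nhds
  refine squeeze_zero' ?_ ?_ hlim
  · filter_upwards [self_mem_nhdsWithin] with r (hr : 0 < r)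
    exact mul_nonneg (by positivity) (integral_nonneg fun _ => by positivity)
  filter_upwards [Ioo_mem_nhdsGT (lt_min hε one_pos)] with r ⟨hr, hrmin⟩
  have hr1 : r ≤ 1 := (hrmin.trans_le (min_le_right _ _)).le
  have hrm : r ^ (-m) * r ^ N ≤ 1 := by
    rw [← Real.rpow_natCast, ← Real.rpow_add hr]
    exact Real.rpow_le_one hr.le hr1 (by linarith)
  have hrN : r ^ N ≤ 1 := pow_le_one₀ hr.le hr1
  calc r ^ (-m) * ∫ z in Metric.ball z₀ r, ‖f z‖ ^ 2
      ≤ r ^ (-m) * ((C * r ^ N) ^ 2 * (Real.pi * r ^ 2)) := by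
        gcongr
        exact setIntegral_ball_norm_sq_le hr.le (hrmin.le.trans (min_le_left _ _)) hball
    _ = (C ^ 2 * Real.pi * r ^ 2) * ((r ^ (-m) * r ^ N) * r ^ N) := by ring
    _ ≤ (C ^ 2 * Real.pi * r ^ 2) * (1 * 1) := by gcongr
    _ = C ^ 2 * Real.pi * r ^ 2 := by ring

lemma le_setIntegral_ball_norm_sq {C r : ℝ} {k : ℕ} (hr : 0 ≤ r)
    (hint : IntegrableOn (fun z => ‖f z‖ ^ 2) (Metric.ball z₀ r))
    (hC : ∀ z ∈ Metric.ball z₀ r, ‖z - z₀‖ ^ k ≤ C * ‖f z‖) :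
    Real.pi / 16 / 4 ^ k * r ^ (2 * k + 2) ≤
      C ^ 2 * ∫ z in Metric.ball z₀ r, ‖f z‖ ^ 2 := by
  set c : ℂ := z₀ + (3 * r / 4 : ℝ)
  have hc : ‖c - z₀‖ = 3 * r / 4 := by
    simp only [c, add_sub_cancel_left, Complex.norm_real, Real.norm_eq_abs]
    exact abs_of_nonneg (by positivity)
  have hsub : Metric.ball c (r / 4) ⊆ Metric.ball z₀ r :=
    Metric.ball_subset_ball' (by rw [dist_eq_norm, hc]; linarith)
  have hlow : ∀ z ∈ Metric.ball c (r / 4), (r / 2) ^ (2 * k) ≤ C ^ 2 * ‖f z‖ ^ 2 := fun z hz => by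
    have hz' : r / 2 ≤ ‖z - z₀‖ := by
      have htri : ‖c - z₀‖ ≤ ‖c - z‖ + ‖z - z₀‖ := norm_sub_le_norm_sub_add_norm_sub c z z₀
      have hcz : ‖c - z‖ < r / 4 := mem_ball_iff_norm'.1 hz
      linarith
    calc (r / 2) ^ (2 * k) = ((r / 2) ^ k) ^ 2 := by ring
      _ ≤ (‖z - z₀‖ ^ k) ^ 2 := by gcongr
      _ ≤ (C * ‖f z‖) ^ 2 := by gcongr; exact hC z (hsub hz)
      _ = C ^ 2 * ‖f z‖ ^ 2 := mul_pow _ _ _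
  calc Real.pi / 16 / 4 ^ k * r ^ (2 * k + 2)
      = ∫ _ in Metric.ball c (r / 4), (r / 2) ^ (2 * k) := by
        rw [setIntegral_const, volume_real_ball c (by positivity), smul_eq_mul, div_pow, div_pow,
          pow_mul 2]
        ring
    _ ≤ ∫ z in Metric.ball c (r / 4), C ^ 2 * ‖f z‖ ^ 2 :=
        setIntegral_mono_on (integrableOn_const measure_ball_lt_top.ne)
          ((hint.mono_set hsub).const_mul _) measurableSet_ball hlow
    _ ≤ ∫ z in Metric.ball z₀ r, C ^ 2 * ‖f z‖ ^ 2 :=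
        setIntegral_mono_set (hint.const_mul _) (ae_of_all _ fun _ => by positivity)
          hsub.eventuallyLE
    _ = C ^ 2 * ∫ z in Metric.ball z₀ r, ‖f z‖ ^ 2 := integral_const_mul _ _

lemma not_vanishesInfiniteOrder_of_isBigO {k : ℕ}
    (hint : IntegrableAtFilter (fun z => ‖f z‖ ^ 2) (𝓝 z₀))
    (hk : (fun z => ‖z - z₀‖ ^ k) =O[𝓝 z₀] f) : ¬ VanishesInfiniteOrder f z₀ := by
  intro hvan
  obtain ⟨s, hs, hint⟩ := hint
  obtain ⟨C, hC⟩ := hk.bound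
  obtain ⟨ε, hε, hball⟩ := Metric.eventually_nhds_iff_ball.1 (hC.and hs)
  have hlow : ∀ᶠ r in 𝓝[>] (0 : ℝ), Real.pi / 16 / 4 ^ k ≤
      C ^ 2 * (r ^ (-(2 * k + 2 : ℝ)) * ∫ z in Metric.ball z₀ r, ‖f z‖ ^ 2) := by
    filter_upwards [Ioo_mem_nhdsGT hε] with r ⟨hr, hrε⟩
    have hsub : Metric.ball z₀ r ⊆ Metric.ball z₀ ε := Metric.ball_subset_ball hrε.le
    have hle := le_setIntegral_ball_norm_sq hr.le
      (hint.mono_set fun z hz => (hball z (hsub hz)).2)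
      fun z hz => by simpa only [norm_pow, norm_norm] using (hball z (hsub hz)).1
    rw [Real.rpow_neg hr.le, mul_left_comm, ← div_eq_inv_mul, le_div_iff₀ (by positivity)]
    exact_mod_cast hle
  have hlim := (hvan (2 * k + 2) (by positivity)).const_mul (C ^ 2)
  rw [mul_zero] at hlim
  exact (ge_of_tendsto hlim hlow).not_gt (by positivity)

end FiniteOrder

/-! ### Unique continuation for square integrable quotients -/

/-- The smooth regularisation `w̄ / (|w|² + δ)` of `w⁻¹`; it recovers `w⁻¹` as `δ → 0`, also at
`w = 0` with the convention `0⁻¹ = 0`. -/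
noncomputable def regularizedInv (δ : ℝ) (w : ℂ) : ℂ :=
  conj w / (‖w‖ ^ 2 + δ : ℝ)

section RegularizedInv

variable {δ : ℝ} {w : ℂ}

lemma measurable_regularizedInv (δ : ℝ) : Measurable (regularizedInv δ) := by
  unfold regularizedInv
  fun_prop

lemma norm_regularizedInv_le (hδ : 0 ≤ δ) (w : ℂ) : ‖regularizedInv δ w‖ ≤ ‖w⁻¹‖ := by
  obtain rfl | hw := eq_or_ne w 0
  · simp [regularizedInv]
  have hw' : 0 < ‖w‖ := norm_pos_iff.2 hw
  rw [regularizedInv, norm_div, RCLike.norm_conj, Complex.norm_real,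
    Real.norm_of_nonneg (by positivity), norm_inv, div_le_iff₀ (by positivity), sq, mul_add,
    inv_mul_cancel_left₀ hw'.ne']
  exact le_add_of_nonneg_right (by positivity)

lemma norm_sq_add_ne_zero (hδ : 0 < δ) (w : ℂ) : ((‖w‖ ^ 2 + δ : ℝ) : ℂ) ≠ 0 :=
  Complex.ofReal_ne_zero.2 (by positivity)

lemma contDiff_regularizedInv {n : WithTop ℕ∞} (hδ : 0 < δ) : ContDiff ℝ n (regularizedInv δ) :=
  Complex.conjCLE.contDiff.mul <|
    (Complex.ofRealCLM.contDiff.comp ((contDiff_norm_sq ℝ).add contDiff_const)).inv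
      (norm_sq_add_ne_zero hδ)

lemma tendsto_regularizedInv (w : ℂ) :
    Tendsto (fun δ => regularizedInv δ w) (𝓝[>] 0) (𝓝 w⁻¹) := by
  obtain rfl | hw := eq_or_ne w 0
  · simp [regularizedInv]
  have hne : ((‖w‖ ^ 2 + 0 : ℝ) : ℂ) ≠ 0 := by simp [hw]
  have hcont : ContinuousAt (fun δ => regularizedInv δ w) 0 := by
    unfold regularizedInv
    fun_prop (disch := exact hne)
  have hlim := hcont.tendsto.mono_left (nhdsWithin_le_nhds (s := Set.Ioi 0))
  rwa [regularizedInv, add_zero, ← Complex.normSq_eq_norm_sq, div_eq_mul_inv,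
    ← Complex.ofReal_inv, ← Complex.inv_def] at hlim

lemma wirtingerDBar_regularizedInv (hδ : 0 < δ) (w : ℂ) :
    wirtingerDBar (regularizedInv δ) w = δ / (‖w‖ ^ 2 + δ : ℝ) ^ 2 := by
  have hnorm (w : ℂ) : ((‖w‖ ^ 2 + δ : ℝ) : ℂ) = w * conj w + δ := by
    rw [Complex.mul_conj, Complex.normSq_eq_norm_sq, Complex.ofReal_add]
  have hconj : DifferentiableAt ℝ (fun w : ℂ => conj w) w := Complex.conjCLE.differentiableAt
  have hden : wirtingerDBar (fun w => w * conj w + δ) w = w := by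
    rw [wirtingerDBar_comp (F := fun v => v + δ) ((hasDerivAt_id _).add_const _) (by fun_prop),
      wirtingerDBar_mul (by fun_prop) hconj, wirtingerDBar_conj,
      wirtingerDBar_eq_zero (by fun_prop)]
    ring
  have hmul : (fun w => regularizedInv δ w * (w * conj w + δ)) = fun w => conj w := by
    funext w
    rw [regularizedInv, hnorm, div_mul_cancel₀ _ (hnorm w ▸ norm_sq_add_ne_zero hδ w)]
  have hprod := wirtingerDBar_mul (z := w) (g := fun w => w * conj w + δ)
    ((contDiff_regularizedInv (n := 1) hδ).differentiable one_ne_zero w) (by fun_prop)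
  rw [hmul, wirtingerDBar_conj, hden] at hprod
  have hne := hnorm w ▸ norm_sq_add_ne_zero hδ w
  rw [hnorm, eq_div_iff (pow_ne_zero 2 hne)]
  linear_combination -(w * conj w + δ) * hprod - w * congrFun hmul w

lemma norm_wirtingerDBar_regularizedInv_le (hδ : 0 < δ) (hw : w ≠ 0) :
    ‖wirtingerDBar (regularizedInv δ) w‖ ≤ ‖w⁻¹‖ ^ 2 := by
  rw [wirtingerDBar_regularizedInv hδ, norm_div, norm_pow, Complex.norm_real, Complex.norm_real,
    Real.norm_of_nonneg hδ.le, Real.norm_of_nonneg (by positivity), norm_inv, inv_pow,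
    div_le_iff₀ (by positivity), inv_mul_eq_div, le_div_iff₀ (by positivity)]
  nlinarith [sq_nonneg δ, sq_nonneg (‖w‖ ^ 2), mul_nonneg hδ.le (sq_nonneg ‖w‖)]

lemma tendsto_wirtingerDBar_regularizedInv (hw : w ≠ 0) :
    Tendsto (fun δ => wirtingerDBar (regularizedInv δ) w) (𝓝[>] 0) (𝓝 0) := by
  have hne : ((‖w‖ ^ 2 + 0 : ℝ) : ℂ) ^ 2 ≠ 0 := by simp [hw]
  have hcont : ContinuousAt (fun δ : ℝ => (δ / (‖w‖ ^ 2 + δ : ℝ) ^ 2 : ℂ)) 0 := by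
    fun_prop (disch := exact hne)
  have hlim := hcont.tendsto.mono_left (nhdsWithin_le_nhds (s := Set.Ioi 0))
  rw [Complex.ofReal_zero, zero_div] at hlim
  refine hlim.congr' ?_
  filter_upwards [self_mem_nhdsWithin] with δ hδ
  exact (wirtingerDBar_regularizedInv hδ w).symm

end RegularizedInv

section WeightedEstimate

variable {F : ℂ → ℝ≥0∞}

lemma enorm_cexp_le {w : ℂ} {x : ℝ≥0∞} (hw : ‖w‖ₑ ≤ x) : ‖Complex.exp w‖ₑ ≤ EReal.exp x := by
  have hre : (w.re : EReal) ≤ x := calc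
    (w.re : EReal) ≤ (‖w‖ : ℝ) := by exact_mod_cast Complex.re_le_norm w
    _ = (‖w‖ₑ : EReal) := by
      rw [← ofReal_norm, EReal.coe_ennreal_ofReal, max_eq_left (norm_nonneg w)]
    _ ≤ x := by exact_mod_cast hw
  calc ‖Complex.exp w‖ₑ = EReal.exp (w.re : EReal) := by
        rw [EReal.exp_coe, ← ofReal_norm, Complex.norm_exp]
    _ ≤ EReal.exp x := EReal.exp_monotone hre

lemma inv_exp_le_enorm_cexp {w : ℂ} {x : ℝ≥0∞} (hw : ‖w‖ₑ ≤ x) :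
    (EReal.exp x)⁻¹ ≤ ‖Complex.exp w‖ₑ := by
  rw [← inv_inv (Complex.exp w), enorm_inv (inv_ne_zero (Complex.exp_ne_zero w)),
    ← Complex.exp_neg, ENNReal.inv_le_inv]
  exact enorm_cexp_le (by rwa [enorm_neg])

lemma wirtingerDBar_mul_exp_neg_cauchyTransform {h ψ : ℂ → ℂ} (hh : ContDiff ℝ 1 h)
    (hψ : ContDiff ℝ 1 ψ) (hψc : HasCompactSupport ψ) (z : ℂ) :
    wirtingerDBar (fun z => h z * Complex.exp (-cauchyTransform ψ z)) z =
      (wirtingerDBar h z - h z * ψ z) * Complex.exp (-cauchyTransform ψ z) := by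
  have hT : DifferentiableAt ℝ (cauchyTransform ψ) z :=
    (contDiff_cauchyTransform (n := 1) hψ hψc).differentiable one_ne_zero z
  have hexp := wirtingerDBar_comp (F := fun w => Complex.exp (-w))
    ((hasDerivAt_neg _).cexp) hT
  rw [wirtingerDBar_mul (hh.differentiable one_ne_zero z) (by fun_prop), hexp,
    wirtingerDBar_cauchyTransform hψ hψc]
  ring

lemma setLIntegral_enorm_mul_inv_exp_le {h ψ : ℂ → ℂ} (hh : ContDiff ℝ 1 h)
    (hc : HasCompactSupport h) (hψ : ContDiff ℝ 1 ψ) (hψc : HasCompactSupport ψ)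
    (hF : ∀ ζ, ‖ψ ζ‖ₑ ≤ F ζ) (s : Set ℂ) :
    ∫⁻ z in s, ‖h z‖ₑ * (EReal.exp (cauchyPotential F z))⁻¹ ≤
      (volume s + ENNReal.ofReal (2 * Real.pi)) *
        ∫⁻ z, ‖wirtingerDBar h z - h z * ψ z‖ₑ * EReal.exp (cauchyPotential F z) := by
  set k : ℂ → ℂ := fun z => h z * Complex.exp (-cauchyTransform ψ z)
  have hT : ContDiff ℝ 1 (cauchyTransform ψ) := contDiff_cauchyTransform (n := 1) hψ hψc
  have hk : ContDiff ℝ 1 k := hh.mul (Complex.contDiff_exp.comp hT.neg)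
  have hkc : HasCompactSupport k := hc.mul_right
  have hneg (z : ℂ) : ‖-cauchyTransform ψ z‖ₑ ≤ cauchyPotential F z := by
    rw [enorm_neg]
    exact enorm_cauchyTransform_le hF z
  have hrep (z : ℂ) : ‖k z‖ₑ ≤ cauchyPotential (fun ζ => ‖wirtingerDBar k ζ‖ₑ) z := by
    rw [← cauchyTransform_wirtingerDBar hk hkc z]
    exact enorm_cauchyTransform_le (fun _ => le_rfl) z
  calc ∫⁻ z in s, ‖h z‖ₑ * (EReal.exp (cauchyPotential F z))⁻¹
      ≤ ∫⁻ z in s, cauchyPotential (fun ζ => ‖wirtingerDBar k ζ‖ₑ) z := by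
        refine lintegral_mono fun z => le_trans ?_ (hrep z)
        rw [enorm_mul]
        gcongr
        exact inv_exp_le_enorm_cexp (hneg z)
    _ ≤ (volume s + ENNReal.ofReal (2 * Real.pi)) * ∫⁻ z, ‖wirtingerDBar k z‖ₑ :=
        setLIntegral_cauchyPotential_le (continuous_wirtingerDBar hk).measurable.enorm s
    _ ≤ _ := by
        gcongr with z
        rw [wirtingerDBar_mul_exp_neg_cauchyTransform hh hψ hψc, enorm_mul]
        gcongr
        exact enorm_cexp_le (hneg z)

end WeightedEstimate

/-- The weight `exp p`, where `p` is the Cauchy potential of the cut-off quotient `|χ ∂̄g / g|`. -/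
noncomputable def quotientWeight (χ g : ℂ → ℂ) (z : ℂ) : ℝ≥0∞ :=
  EReal.exp (cauchyPotential (fun ζ => ‖χ ζ * (wirtingerDBar g ζ / g ζ)‖ₑ) z)

section QuotientWeight

variable {χ g a : ℂ → ℂ}

lemma measurable_cutoff_mul_quotient (hχ : Continuous χ) (hg : ContDiff ℝ 1 g) :
    Measurable fun ζ => ‖χ ζ * (wirtingerDBar g ζ / g ζ)‖ₑ :=
  (hχ.measurable.mul
    ((continuous_wirtingerDBar hg).measurable.div hg.continuous.measurable)).enorm

lemma measurable_quotientWeight (hχ : Continuous χ) (hg : ContDiff ℝ 1 g) :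
    Measurable (quotientWeight χ g) :=
  EReal.measurable_exp.comp
    (measurable_cauchyPotential (measurable_cutoff_mul_quotient hχ hg)).coe_ereal_ennreal

lemma quotientWeight_ne_zero (z : ℂ) : quotientWeight χ g z ≠ 0 := by
  simp [quotientWeight]

lemma setLIntegral_quotientWeight_lt_top (hχ : Continuous χ) (hχc : HasCompactSupport χ)
    (hg : ContDiff ℝ 1 g) (hq : ∫⁻ ζ, ‖χ ζ * (wirtingerDBar g ζ / g ζ)‖ₑ ^ 2 ≠ ⊤) {T : Set ℂ}
    (hT : volume T ≠ ⊤) : ∫⁻ z in T, quotientWeight χ g z < ⊤ :=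
  setLIntegral_exp_cauchyPotential_lt_top (measurable_cutoff_mul_quotient hχ hg)
    (fun _ hζ => subset_tsupport χ (left_ne_zero_of_mul (enorm_ne_zero.1 hζ)))
    hχc.isCompact.measure_lt_top.ne hT hq

lemma ae_quotientWeight_ne_top (hχ : Continuous χ) (hχc : HasCompactSupport χ)
    (hg : ContDiff ℝ 1 g) (hq : ∫⁻ ζ, ‖χ ζ * (wirtingerDBar g ζ / g ζ)‖ₑ ^ 2 ≠ ⊤) :
    ∀ᵐ z, quotientWeight χ g z ≠ ⊤ :=
  ae_of_forall_measure_lt_top_ae_restrict _ fun _ _ hT =>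
    (ae_lt_top (measurable_quotientWeight hχ hg)
      (setLIntegral_quotientWeight_lt_top hχ hχc hg hq hT.ne).ne).mono fun _ => LT.lt.ne

lemma lintegral_enorm_mul_quotientWeight_ne_top {E : Type*} [NormedAddCommGroup E]
    (hχ : Continuous χ) (hχc : HasCompactSupport χ) (hg : ContDiff ℝ 1 g)
    (hq : ∫⁻ ζ, ‖χ ζ * (wirtingerDBar g ζ / g ζ)‖ₑ ^ 2 ≠ ⊤) {φ : ℂ → E}
    (hφ : Continuous φ) (hφc : HasCompactSupport φ) :
    ∫⁻ z, ‖φ z‖ₑ * quotientWeight χ g z ≠ ⊤ := by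
  obtain ⟨B, hB⟩ := hφc.exists_bound_of_continuous hφ
  have hsupp : Function.support (fun z => ‖φ z‖ₑ * quotientWeight χ g z) ⊆ tsupport φ :=
    fun z hz => subset_tsupport φ (enorm_ne_zero.1 (left_ne_zero_of_mul hz))
  have hfin := setLIntegral_quotientWeight_lt_top hχ hχc hg hq hφc.isCompact.measure_lt_top.ne
  refine ne_top_of_le_ne_top (b := ENNReal.ofReal B * ∫⁻ z in tsupport φ, quotientWeight χ g z)
    (by finiteness) ?_
  calc ∫⁻ z, ‖φ z‖ₑ * quotientWeight χ g z
      = ∫⁻ z in tsupport φ, ‖φ z‖ₑ * quotientWeight χ g z :=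
        (setLIntegral_eq_of_support_subset hsupp).symm
    _ ≤ ∫⁻ z in tsupport φ, ENNReal.ofReal B * quotientWeight χ g z := by
        gcongr with z
        rw [← ofReal_norm]
        exact ENNReal.ofReal_le_ofReal (hB z)
    _ = ENNReal.ofReal B * ∫⁻ z in tsupport φ, quotientWeight χ g z :=
        lintegral_const_mul _ (measurable_quotientWeight hχ hg)

lemma tendsto_lintegral_enorm_mul_quotientWeight (hχ : Continuous χ) (hχc : HasCompactSupport χ)
    (hg : ContDiff ℝ 1 g) (hq : ∫⁻ ζ, ‖χ ζ * (wirtingerDBar g ζ / g ζ)‖ₑ ^ 2 ≠ ⊤)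
    {ι : Type*} {l : Filter ι} [l.IsCountablyGenerated] {Φ : ι → ℂ → ℂ} {Φ₀ : ℂ → ℂ} {φ : ℂ → ℝ}
    (hφ : Continuous φ) (hφc : HasCompactSupport φ) (hΦ : ∀ᶠ δ in l, Continuous (Φ δ))
    (hle : ∀ᶠ δ in l, ∀ᵐ z, ‖Φ δ z‖ ≤ φ z)
    (hlim : ∀ᵐ z, Tendsto (fun δ => Φ δ z) l (𝓝 (Φ₀ z))) :
    Tendsto (fun δ => ∫⁻ z, ‖Φ δ z‖ₑ * quotientWeight χ g z) l
      (𝓝 (∫⁻ z, ‖Φ₀ z‖ₑ * quotientWeight χ g z)) := by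
  refine tendsto_lintegral_filter_of_dominated_convergence
    (fun z => ‖φ z‖ₑ * quotientWeight χ g z) ?_ ?_
    (lintegral_enorm_mul_quotientWeight_ne_top hχ hχc hg hq hφ hφc) ?_
  · filter_upwards [hΦ] with δ hδ
    exact hδ.measurable.enorm.mul (measurable_quotientWeight hχ hg)
  · filter_upwards [hle] with δ hδ
    filter_upwards [hδ] with z hz
    gcongr
    exact enorm_le_iff_norm_le.2 (hz.trans (Real.le_norm_self _))
  · filter_upwards [hlim, ae_quotientWeight_ne_top hχ hχc hg hq] with z hz hW
    exact ENNReal.Tendsto.mul_const hz.enorm (.inr hW)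

lemma norm_one_sub_mul_regularizedInv_le {δ : ℝ} (hδ : 0 ≤ δ) (w : ℂ) :
    ‖1 - w * regularizedInv δ w‖ ≤ 2 := by
  have hle : ‖w‖ * ‖regularizedInv δ w‖ ≤ 1 := calc
    ‖w‖ * ‖regularizedInv δ w‖ ≤ ‖w‖ * ‖w⁻¹‖ := by gcongr; exact norm_regularizedInv_le hδ w
    _ ≤ 1 := by rw [norm_inv]; exact mul_inv_le_one
  calc ‖1 - w * regularizedInv δ w‖ ≤ ‖(1 : ℂ)‖ + ‖w * regularizedInv δ w‖ := norm_sub_le _ _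
    _ ≤ 2 := by rw [norm_one, norm_mul]; linarith

lemma ae_tendsto_mul_one_sub_regularizedInv (hg : Differentiable ℝ g) :
    ∀ᵐ z, Tendsto (fun δ => wirtingerDBar g z * (1 - g z * regularizedInv δ (g z))) (𝓝[>] 0)
      (𝓝 0) := by
  -- Where `g = 0` the limit of `1 - g * regularizedInv δ g` is `1`, but `∂̄g = 0` a.e. there.
  filter_upwards [ae_wirtingerDBar_eq_zero hg] with z hz
  obtain h0 | h0 := eq_or_ne (g z) 0
  · simp only [hz h0, zero_mul, tendsto_const_nhds]
  · simpa [h0] using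
      (((tendsto_regularizedInv (g z)).const_mul (g z)).const_sub 1).const_mul (wirtingerDBar g z)

lemma wirtingerDBar_mul_sub_mul_regularizedInv (ha : Differentiable ℝ a)
    (hg : Differentiable ℝ g) (haχ : ∀ z, a z * χ z = a z) (δ : ℝ) (z : ℂ) :
    wirtingerDBar (fun z => a z * g z) z -
        a z * g z * (χ z * (wirtingerDBar g z * regularizedInv δ (g z))) =
      wirtingerDBar a z * g z +
        a z * (wirtingerDBar g z * (1 - g z * regularizedInv δ (g z))) := by
  rw [wirtingerDBar_mul (ha z) (hg z)]
  linear_combination -(g z * wirtingerDBar g z * regularizedInv δ (g z)) * haχ z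

lemma setLIntegral_enorm_mul_inv_quotientWeight_le_regularized (ha : ContDiff ℝ 1 a)
    (hac : HasCompactSupport a) (hχ : ContDiff ℝ 1 χ) (hχc : HasCompactSupport χ)
    (haχ : ∀ z, a z * χ z = a z) (hg : ContDiff ℝ 2 g) {δ : ℝ} (hδ : 0 < δ) (s : Set ℂ) :
    ∫⁻ z in s, ‖a z * g z‖ₑ * (quotientWeight χ g z)⁻¹ ≤
      (volume s + ENNReal.ofReal (2 * Real.pi)) *
        ∫⁻ z, ‖wirtingerDBar a z * g z + a z * (wirtingerDBar g z *
          (1 - g z * regularizedInv δ (g z)))‖ₑ * quotientWeight χ g z := by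
  have hg1 : ContDiff ℝ 1 g := hg.of_le one_le_two
  have hdg : ContDiff ℝ 1 (wirtingerDBar g) := contDiff_wirtingerDBar hg (by norm_num)
  simp only [← wirtingerDBar_mul_sub_mul_regularizedInv (ha.differentiable one_ne_zero)
    (hg1.differentiable one_ne_zero) haχ]
  refine setLIntegral_enorm_mul_inv_exp_le (ha.mul hg1) hac.mul_right
    (hχ.mul (hdg.mul ((contDiff_regularizedInv hδ).comp hg1))) hχc.mul_right (fun ζ => ?_) s
  rw [div_eq_mul_inv, enorm_le_iff_norm_le, norm_mul, norm_mul, norm_mul, norm_mul]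
  gcongr
  exact norm_regularizedInv_le hδ.le _

lemma setLIntegral_enorm_mul_inv_quotientWeight_le (ha : ContDiff ℝ 1 a)
    (hac : HasCompactSupport a) (hχ : ContDiff ℝ 1 χ) (hχc : HasCompactSupport χ)
    (haχ : ∀ z, a z * χ z = a z) (hg : ContDiff ℝ 2 g)
    (hq : ∫⁻ ζ, ‖χ ζ * (wirtingerDBar g ζ / g ζ)‖ₑ ^ 2 ≠ ⊤) {s : Set ℂ} (hs : volume s ≠ ⊤) :
    ∫⁻ z in s, ‖a z * g z‖ₑ * (quotientWeight χ g z)⁻¹ ≤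
      (volume s + ENNReal.ofReal (2 * Real.pi)) *
        ∫⁻ z, ‖wirtingerDBar a z * g z‖ₑ * quotientWeight χ g z := by
  have hg1 : ContDiff ℝ 1 g := hg.of_le one_le_two
  have hcont := ha.continuous
  have hcont' := continuous_wirtingerDBar ha
  have hgcont := hg.continuous
  have hgcont' := continuous_wirtingerDBar hg1
  have hineq := (eventually_mem_nhdsWithin (a := (0 : ℝ))).mono fun δ (hδ : δ ∈ Set.Ioi (0 : ℝ)) =>
    setLIntegral_enorm_mul_inv_quotientWeight_le_regularized ha hac hχ hχc haχ hg hδ s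
  refine ge_of_tendsto (ENNReal.Tendsto.const_mul ?_ (.inr (by finiteness))) hineq
  refine tendsto_lintegral_enorm_mul_quotientWeight hχ.continuous hχc hg1 hq
    (φ := fun z => ‖wirtingerDBar a z * g z‖ + ‖a z * wirtingerDBar g z‖ * 2)
    (by fun_prop) ?_ ?_ ?_ ?_
  · exact (hasCompactSupport_wirtingerDBar hac).mul_right.norm.add hac.mul_right.norm.mul_right
  · filter_upwards [self_mem_nhdsWithin] with δ (hδ : 0 < δ)
    have hreg := (contDiff_regularizedInv (n := 1) hδ).continuous
    fun_prop
  · filter_upwards [self_mem_nhdsWithin] with δ (hδ : 0 < δ)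
    filter_upwards with z
    refine (norm_add_le _ _).trans ?_
    rw [← mul_assoc, norm_mul (a z * wirtingerDBar g z)]
    gcongr
    exact norm_one_sub_mul_regularizedInv_le hδ.le _
  · filter_upwards [ae_tendsto_mul_one_sub_regularizedInv (hg1.differentiable one_ne_zero)]
      with z hz
    simpa only [mul_zero, add_zero] using (hz.const_mul (a z)).const_add (wirtingerDBar a z * g z)

end QuotientWeight

section FlatWeightedEstimate

variable {χ g a : ℂ → ℂ} {z₀ : ℂ}

lemma wirtingerDBar_mul_regularizedInv_pow {δ : ℝ} (hδ : 0 < δ) (ha : Differentiable ℝ a) (z₀ : ℂ)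
    (k : ℕ) (z : ℂ) :
    wirtingerDBar (fun z => a z * regularizedInv δ (z - z₀) ^ k) z =
      wirtingerDBar a z * regularizedInv δ (z - z₀) ^ k + a z *
        (k * regularizedInv δ (z - z₀) ^ (k - 1) * wirtingerDBar (regularizedInv δ) (z - z₀)) := by
  have hshift : wirtingerDBar (fun z => regularizedInv δ (z - z₀)) z =
      wirtingerDBar (regularizedInv δ) (z - z₀) := by
    simp only [wirtingerDBar, fderiv_comp_sub]
  have hreg : DifferentiableAt ℝ (fun z => regularizedInv δ (z - z₀)) z :=
    ((contDiff_regularizedInv (n := 1) hδ).comp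
      (contDiff_id.sub contDiff_const)).differentiable one_ne_zero z
  rw [wirtingerDBar_mul (ha z) (by fun_prop), wirtingerDBar_comp (hasDerivAt_pow k _) hreg, hshift]

lemma norm_mul_regularizedInv_pow_le {δ : ℝ} (hδ : 0 < δ) (z : ℂ) (k : ℕ) :
    ‖regularizedInv δ (z - z₀) ^ k * g z‖ ≤ ‖divPow g z₀ k z‖ := by
  rw [divPow, mul_comm, norm_mul, norm_mul, norm_pow, norm_pow]
  gcongr
  exact norm_regularizedInv_le hδ.le _

lemma norm_wirtingerDBar_regularizedInv_pow_mul_le {δ : ℝ} (hδ : 0 < δ) {z : ℂ} (hz : z ≠ z₀)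
    (k : ℕ) :
    ‖k * regularizedInv δ (z - z₀) ^ (k - 1) * wirtingerDBar (regularizedInv δ) (z - z₀) * g z‖ ≤
      k * ‖divPow g z₀ (k + 1) z‖ := by
  cases k with
  | zero => simp
  | succ k =>
    calc _ ≤ (k + 1 : ℕ) * ‖(z - z₀)⁻¹‖ ^ k * ‖(z - z₀)⁻¹‖ ^ 2 * ‖g z‖ := by
          rw [norm_mul, norm_mul, norm_mul, norm_pow, Complex.norm_natCast,
            Nat.add_sub_cancel]
          gcongr
          · exact norm_regularizedInv_le hδ.le _
          · exact norm_wirtingerDBar_regularizedInv_le hδ (sub_ne_zero.2 hz)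
      _ = (k + 1 : ℕ) * ‖divPow g z₀ (k + 1 + 1) z‖ := by
          rw [divPow, norm_mul, norm_pow]
          ring

lemma tendsto_lintegral_wirtingerDBar_regularizedInv_pow (ha : ContDiff ℝ 1 a)
    (hac : HasCompactSupport a) (hχ : Continuous χ) (hχc : HasCompactSupport χ)
    (hg : ContDiff ℝ 1 g) (hq : ∫⁻ ζ, ‖χ ζ * (wirtingerDBar g ζ / g ζ)‖ₑ ^ 2 ≠ ⊤)
    (hflat : IsGloballyFlatAt g z₀) (k : ℕ) :
    Tendsto (fun δ => ∫⁻ z, ‖wirtingerDBar (fun z => a z * regularizedInv δ (z - z₀) ^ k) z * g z‖ₑ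
        * quotientWeight χ g z) (𝓝[>] 0)
      (𝓝 (∫⁻ z, ‖wirtingerDBar a z * divPow g z₀ k z‖ₑ * quotientWeight χ g z)) := by
  obtain ⟨M, hM⟩ := exists_norm_divPow_le hflat k
  obtain ⟨M', hM'⟩ := exists_norm_divPow_le hflat (k + 1)
  have hcont := ha.continuous
  have hcont' := continuous_wirtingerDBar ha
  have hdiff := ha.differentiable one_ne_zero
  refine tendsto_lintegral_enorm_mul_quotientWeight hχ hχc hg hq
    (φ := fun z => ‖wirtingerDBar a z‖ * M + ‖a z‖ * (k * M')) (by fun_prop) ?_ ?_ ?_ ?_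
  · exact (hasCompactSupport_wirtingerDBar hac).norm.mul_right.add hac.norm.mul_right
  · filter_upwards [self_mem_nhdsWithin] with δ (hδ : 0 < δ)
    exact (continuous_wirtingerDBar (ha.mul (((contDiff_regularizedInv hδ).comp
      (contDiff_id.sub contDiff_const)).pow k))).mul hg.continuous
  · filter_upwards [self_mem_nhdsWithin] with δ (hδ : 0 < δ)
    filter_upwards [Measure.ae_ne volume z₀] with z hz
    rw [wirtingerDBar_mul_regularizedInv_pow hδ hdiff, add_mul, mul_assoc, mul_assoc (a z)]
    refine (norm_add_le _ _).trans ?_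
    rw [norm_mul, norm_mul (a z)]
    gcongr
    · exact (norm_mul_regularizedInv_pow_le hδ z k).trans (hM z)
    · exact (norm_wirtingerDBar_regularizedInv_pow_mul_le hδ hz k).trans (by gcongr; exact hM' z)
  · filter_upwards [Measure.ae_ne volume z₀] with z hz
    have hreg := tendsto_regularizedInv (z - z₀)
    have hreg' := tendsto_wirtingerDBar_regularizedInv (sub_ne_zero.2 hz)
    have hlim := (((hreg.pow k).const_mul (wirtingerDBar a z)).add
      ((((hreg.pow (k - 1)).const_mul (k : ℂ)).mul hreg').const_mul (a z))).mul_const (g z)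
    rw [mul_zero, mul_zero, add_zero, mul_assoc, mul_comm _ (g z)] at hlim
    refine hlim.congr' ?_
    filter_upwards [self_mem_nhdsWithin] with δ (hδ : 0 < δ)
    rw [wirtingerDBar_mul_regularizedInv_pow hδ hdiff]

lemma setLIntegral_divPow_mul_inv_quotientWeight_le (ha : ContDiff ℝ 1 a)
    (hac : HasCompactSupport a) (hχ : ContDiff ℝ 1 χ) (hχc : HasCompactSupport χ)
    (haχ : ∀ z, a z * χ z = a z) (hg : ContDiff ℝ 2 g)
    (hq : ∫⁻ ζ, ‖χ ζ * (wirtingerDBar g ζ / g ζ)‖ₑ ^ 2 ≠ ⊤)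
    (hflat : IsGloballyFlatAt g z₀) {s : Set ℂ} (hs : volume s ≠ ⊤)
    (k : ℕ) :
    ∫⁻ z in s, ‖a z * divPow g z₀ k z‖ₑ * (quotientWeight χ g z)⁻¹ ≤
      (volume s + ENNReal.ofReal (2 * Real.pi)) *
        ∫⁻ z, ‖wirtingerDBar a z * divPow g z₀ k z‖ₑ * quotientWeight χ g z := by
  have hg1 : ContDiff ℝ 1 g := hg.of_le one_le_two
  have hright := ENNReal.Tendsto.const_mul
    (tendsto_lintegral_wirtingerDBar_regularizedInv_pow ha hac hχ.continuous hχc hg1 hq hflat k)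
    (.inr (show volume s + ENNReal.ofReal (2 * Real.pi) ≠ ⊤ by finiteness))
  have hmeas (δ : ℝ) : AEMeasurable (fun z => ‖a z * regularizedInv δ (z - z₀) ^ k * g z‖ₑ *
      (quotientWeight χ g z)⁻¹) (volume.restrict s) :=
    (((ha.continuous.measurable.mul (((measurable_regularizedInv δ).comp
      (measurable_id.sub_const z₀)).pow_const k)).mul hg.continuous.measurable).enorm.mul
      (measurable_quotientWeight hχ.continuous hg1).inv).aemeasurable
  have hleft (z : ℂ) : ‖a z * divPow g z₀ k z‖ₑ * (quotientWeight χ g z)⁻¹ =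
      liminf (fun δ => ‖a z * regularizedInv δ (z - z₀) ^ k * g z‖ₑ *
        (quotientWeight χ g z)⁻¹) (𝓝[>] 0) := by
    have hlim := (((tendsto_regularizedInv (z - z₀)).pow k).const_mul (a z)).mul_const (g z)
    rw [mul_assoc, mul_comm _ (g z)] at hlim
    exact (ENNReal.Tendsto.mul_const hlim.enorm
      (.inr (ENNReal.inv_ne_top.2 (quotientWeight_ne_zero z)))).liminf_eq.symm
  calc ∫⁻ z in s, ‖a z * divPow g z₀ k z‖ₑ * (quotientWeight χ g z)⁻¹
      ≤ liminf (fun δ => ∫⁻ z in s, ‖a z * regularizedInv δ (z - z₀) ^ k * g z‖ₑ *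
          (quotientWeight χ g z)⁻¹) (𝓝[>] 0) := by
        simp only [hleft]
        exact lintegral_liminf_le' hmeas
    _ ≤ liminf (fun δ => (volume s + ENNReal.ofReal (2 * Real.pi)) *
          ∫⁻ z, ‖wirtingerDBar (fun z => a z * regularizedInv δ (z - z₀) ^ k) z * g z‖ₑ *
            quotientWeight χ g z) (𝓝[>] 0) := by
        refine liminf_le_liminf (eventually_mem_nhdsWithin.mono fun δ hδ => ?_)
        refine setLIntegral_enorm_mul_inv_quotientWeight_le (ha.mul
          (((contDiff_regularizedInv hδ).comp (contDiff_id.sub contDiff_const)).pow k))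
          hac.mul_right hχ hχc (fun z => ?_) hg hq hs
        rw [mul_right_comm, haχ]
    _ = _ := hright.liminf_eq

end FlatWeightedEstimate

section UniqueContinuation

variable {χ g a : ℂ → ℂ} {z₀ : ℂ} {r : ℝ}

lemma norm_eq_pow_mul_norm_divPow {z : ℂ} (hz : z ≠ z₀) (k : ℕ) :
    ‖g z‖ = ‖z - z₀‖ ^ k * ‖divPow g z₀ k z‖ := by
  have hz' : ‖z - z₀‖ ≠ 0 := norm_ne_zero_iff.2 (sub_ne_zero.2 hz)
  rw [divPow, norm_mul, norm_pow, norm_inv, inv_pow, mul_left_comm,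
    mul_inv_cancel₀ (pow_ne_zero k hz'), mul_one]

lemma pow_mul_norm_mul_divPow_le (hr : 0 < r) {b : ℂ → ℂ}
    (hb : ∀ z ∈ Metric.ball z₀ (2 * r), b z = 0) (z : ℂ) (k : ℕ) :
    r ^ k * ‖b z * divPow g z₀ k z‖ ≤ (1 / 2) ^ k * ‖b z * g z‖ := by
  obtain hz | hz := lt_or_ge ‖z - z₀‖ (2 * r)
  · simp [hb z (mem_ball_iff_norm.2 hz)]
  · have hne : z ≠ z₀ := by
      rintro rfl
      rw [sub_self, norm_zero] at hz
      linarith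
    rw [norm_mul, norm_mul, norm_eq_pow_mul_norm_divPow (g := g) hne k]
    calc r ^ k * (‖b z‖ * ‖divPow g z₀ k z‖)
        = (1 / 2) ^ k * (‖b z‖ * ((2 * r) ^ k * ‖divPow g z₀ k z‖)) := by
          rw [mul_pow, one_div, inv_pow]
          field_simp
      _ ≤ (1 / 2) ^ k * (‖b z‖ * (‖z - z₀‖ ^ k * ‖divPow g z₀ k z‖)) := by gcongr

lemma setLIntegral_ball_mul_inv_quotientWeight_le_pow (hr : 0 < r) (ha : ContDiff ℝ 1 a)
    (hac : HasCompactSupport a) (ha1 : ∀ z ∈ Metric.ball z₀ (2 * r), a z = 1)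
    (hχ : ContDiff ℝ 1 χ) (hχc : HasCompactSupport χ)
    (haχ : ∀ z, a z * χ z = a z) (hg : ContDiff ℝ 2 g)
    (hq : ∫⁻ ζ, ‖χ ζ * (wirtingerDBar g ζ / g ζ)‖ₑ ^ 2 ≠ ⊤)
    (hflat : IsGloballyFlatAt g z₀) (k : ℕ) :
    ∫⁻ z in Metric.ball z₀ r, ‖g z‖ₑ * (quotientWeight χ g z)⁻¹ ≤
      ENNReal.ofReal ((1 / 2) ^ k) *
        ((volume (Metric.ball z₀ r) + ENNReal.ofReal (2 * Real.pi)) *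
          ∫⁻ z, ‖wirtingerDBar a z * g z‖ₑ * quotientWeight χ g z) := by
  have hdba : ∀ z ∈ Metric.ball z₀ (2 * r), wirtingerDBar a z = 0 := fun z hz => by
    rw [wirtingerDBar_congr (eventually_of_mem (Metric.isOpen_ball.mem_nhds hz) ha1),
      wirtingerDBar_eq_zero (differentiableAt_const _)]
  have hleft : ∀ᵐ z, z ∈ Metric.ball z₀ r → ‖g z‖ₑ * (quotientWeight χ g z)⁻¹ ≤
      ENNReal.ofReal (r ^ k) * (‖a z * divPow g z₀ k z‖ₑ * (quotientWeight χ g z)⁻¹) := by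
    filter_upwards [Measure.ae_ne volume z₀] with z hne hz
    rw [← mul_assoc, ha1 z (Metric.ball_subset_ball (by linarith) hz), one_mul, ← ofReal_norm,
      ← ofReal_norm, ← ENNReal.ofReal_mul (by positivity), norm_eq_pow_mul_norm_divPow hne k]
    gcongr
    exact (mem_ball_iff_norm.1 hz).le
  have hright (z : ℂ) : ENNReal.ofReal (r ^ k) *
      (‖wirtingerDBar a z * divPow g z₀ k z‖ₑ * quotientWeight χ g z) ≤
      ENNReal.ofReal ((1 / 2) ^ k) * (‖wirtingerDBar a z * g z‖ₑ * quotientWeight χ g z) := by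
    rw [← mul_assoc, ← mul_assoc, ← ofReal_norm, ← ofReal_norm,
      ← ENNReal.ofReal_mul (by positivity), ← ENNReal.ofReal_mul (by positivity)]
    exact mul_le_mul_left (ENNReal.ofReal_le_ofReal (pow_mul_norm_mul_divPow_le hr hdba z k)) _
  calc ∫⁻ z in Metric.ball z₀ r, ‖g z‖ₑ * (quotientWeight χ g z)⁻¹
      ≤ ENNReal.ofReal (r ^ k) * ∫⁻ z in Metric.ball z₀ r,
          ‖a z * divPow g z₀ k z‖ₑ * (quotientWeight χ g z)⁻¹ := by
        rw [← lintegral_const_mul' _ _ ENNReal.ofReal_ne_top]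
        exact setLIntegral_mono_ae' measurableSet_ball hleft
    _ ≤ ENNReal.ofReal (r ^ k) * ((volume (Metric.ball z₀ r) + ENNReal.ofReal (2 * Real.pi)) *
          ∫⁻ z, ‖wirtingerDBar a z * divPow g z₀ k z‖ₑ * quotientWeight χ g z) := by
        gcongr
        exact setLIntegral_divPow_mul_inv_quotientWeight_le ha hac hχ hχc haχ hg hq hflat
          measure_ball_lt_top.ne k
    _ ≤ _ := by
        rw [mul_left_comm, mul_left_comm (ENNReal.ofReal ((1 / 2) ^ k)),
          ← lintegral_const_mul' _ _ ENNReal.ofReal_ne_top,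
          ← lintegral_const_mul' _ _ ENNReal.ofReal_ne_top]
        exact mul_le_mul_right (lintegral_mono hright) _

lemma eqOn_zero_of_setLIntegral_mul_inv_quotientWeight_eq_zero (hχ : Continuous χ)
    (hχc : HasCompactSupport χ) (hg : ContDiff ℝ 1 g)
    (hq : ∫⁻ ζ, ‖χ ζ * (wirtingerDBar g ζ / g ζ)‖ₑ ^ 2 ≠ ⊤) {U : Set ℂ} (hU : IsOpen U)
    (h0 : ∫⁻ z in U, ‖g z‖ₑ * (quotientWeight χ g z)⁻¹ = 0) : Set.EqOn g 0 U := by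
  have hmeas : Measurable fun z => ‖g z‖ₑ * (quotientWeight χ g z)⁻¹ :=
    hg.continuous.measurable.enorm.mul (measurable_quotientWeight hχ hg).inv
  have hae : g =ᵐ[volume.restrict U] 0 := by
    filter_upwards [(lintegral_eq_zero_iff hmeas).1 h0,
      ae_restrict_of_ae (ae_quotientWeight_ne_top hχ hχc hg hq)] with z hz hW
    exact enorm_eq_zero.1 ((mul_eq_zero.1 hz).resolve_right (ENNReal.inv_ne_zero.2 hW))
  exact Measure.eqOn_open_of_ae_eq hae hU hg.continuous.continuousOn continuousOn_const

lemma exists_cutoff_pair (z₀ : ℂ) (hr : 0 < r) : ∃ a χ : ℂ → ℂ,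
    ContDiff ℝ 1 a ∧ HasCompactSupport a ∧ (∀ z ∈ Metric.ball z₀ (2 * r), a z = 1) ∧
    ContDiff ℝ 1 χ ∧ HasCompactSupport χ ∧ (∀ z, ‖χ z‖ ≤ 1) ∧
    Function.support χ ⊆ Metric.ball z₀ (4 * r) ∧ ∀ z, a z * χ z = a z := by
  let α : ContDiffBump z₀ := ⟨2 * r, 3 * r, by linarith, by linarith⟩
  let β : ContDiffBump z₀ := ⟨3 * r, 4 * r, by linarith, by linarith⟩
  refine ⟨fun z => α z, fun z => β z, Complex.ofRealCLM.contDiff.comp α.contDiff,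
    α.hasCompactSupport.comp_left Complex.ofReal_zero, fun z hz => ?_,
    Complex.ofRealCLM.contDiff.comp β.contDiff,
    β.hasCompactSupport.comp_left Complex.ofReal_zero, fun z => ?_, fun z hz => ?_, fun z => ?_⟩
  · dsimp only
    rw [α.one_of_mem_closedBall (Metric.ball_subset_closedBall hz), Complex.ofReal_one]
  · rw [Complex.norm_real, Real.norm_of_nonneg β.nonneg]
    exact β.le_one
  · rw [← show Function.support β = Metric.ball z₀ (4 * r) from β.support_eq]
    exact Complex.ofReal_ne_zero.1 hz
  · dsimp only
    obtain hz | hz := le_or_gt (dist z z₀) (3 * r)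
    · rw [β.one_of_mem_closedBall hz, Complex.ofReal_one, mul_one]
    · rw [α.zero_of_le_dist hz.le, Complex.ofReal_zero, zero_mul]

lemma eqOn_zero_of_setLIntegral_quotient_ne_top (hr : 0 < r) (hg : ContDiff ℝ 2 g)
    (hflat : IsGloballyFlatAt g z₀)
    (hq : ∫⁻ z in Metric.ball z₀ (4 * r), ‖wirtingerDBar g z / g z‖ₑ ^ 2 ≠ ⊤) :
    Set.EqOn g 0 (Metric.ball z₀ r) := by
  obtain ⟨a, χ, ha, hac, ha1, hχ, hχc, hχ1, hsupp, haχ⟩ := exists_cutoff_pair z₀ hr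
  have hg1 : ContDiff ℝ 1 g := hg.of_le one_le_two
  have hq' : ∫⁻ z, ‖χ z * (wirtingerDBar g z / g z)‖ₑ ^ 2 ≠ ⊤ := by
    rw [← setLIntegral_eq_of_support_subset (s := Metric.ball z₀ (4 * r)) fun z hz =>
      hsupp (left_ne_zero_of_mul (enorm_ne_zero.1 (pow_ne_zero_iff two_ne_zero |>.1 hz)))]
    refine ne_top_of_le_ne_top hq (lintegral_mono fun z => ?_)
    have hχz : ‖χ z‖ₑ ≤ 1 := by
      rw [← ofReal_norm]
      exact ENNReal.ofReal_le_one.2 (hχ1 z)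
    rw [enorm_mul]
    gcongr
    exact mul_le_of_le_one_left' hχz
  refine eqOn_zero_of_setLIntegral_mul_inv_quotientWeight_eq_zero hχ.continuous hχc hg1 hq'
    Metric.isOpen_ball ?_
  have hJ := lintegral_enorm_mul_quotientWeight_ne_top hχ.continuous hχc hg1 hq'
    (φ := fun z => wirtingerDBar a z * g z)
    ((continuous_wirtingerDBar ha).mul hg.continuous)
    (hasCompactSupport_wirtingerDBar hac).mul_right
  have hvol : volume (Metric.ball z₀ r) ≠ ⊤ := measure_ball_lt_top.ne
  have hlim : Tendsto (fun k : ℕ => ENNReal.ofReal ((1 / 2) ^ k)) atTop (𝓝 0) := by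
    simpa using ENNReal.tendsto_ofReal
      (tendsto_pow_atTop_nhds_zero_of_lt_one (r := (1 / 2 : ℝ)) (by norm_num) (by norm_num))
  have hlim' := ENNReal.Tendsto.mul_const (b := (volume (Metric.ball z₀ r) +
    ENNReal.ofReal (2 * Real.pi)) * ∫⁻ z, ‖wirtingerDBar a z * g z‖ₑ * quotientWeight χ g z)
    hlim (.inr (by finiteness))
  rw [zero_mul] at hlim'
  exact le_antisymm (ge_of_tendsto' hlim' fun k =>
    setLIntegral_ball_mul_inv_quotientWeight_le_pow hr ha hac ha1 hχ hχc haχ hg hq' hflat k) zero_le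

end UniqueContinuation

/-! ### Finite order and the size of `∂̄f / f` -/

section Characterization

variable {f : ℂ → ℂ} {z₀ : ℂ} {W : Set ℂ}

lemma eventuallyEq_zero_of_isFlatAt (hf : ContDiffAt ℝ 2 f z₀) (hflat : IsFlatAt f z₀)
    (hq : ∃ U ∈ 𝓝 z₀, ∫⁻ z in U, ‖wirtingerDBar f z / f z‖ₑ ^ 2 ≠ ⊤) : f =ᶠ[𝓝 z₀] 0 := by
  obtain ⟨U, hU, hq⟩ := hq
  obtain ⟨g, hg, hgc, hgf⟩ := exists_contDiff_hasCompactSupport_eventuallyEq (n := 2) hf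
  obtain ⟨ε, hε, hball⟩ := Metric.eventually_nhds_iff_ball.1
    ((eventually_mem_nhds_iff.2 hU).and hgf.eventuallyEq_nhds)
  obtain ⟨B, hB⟩ := hgc.exists_bound_of_continuous hg.continuous
  have hr : 4 * (ε / 4) = ε := by ring
  have hgq : ∫⁻ z in Metric.ball z₀ (4 * (ε / 4)), ‖wirtingerDBar g z / g z‖ₑ ^ 2 ≠ ⊤ := by
    rw [hr, setLIntegral_congr_fun measurableSet_ball fun z hz => by
      rw [wirtingerDBar_congr (hball z hz).2, (hball z hz).2.self_of_nhds]]
    exact ne_top_of_le_ne_top hq (lintegral_mono_set fun z hz => mem_of_mem_nhds (hball z hz).1)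
  have hzero := eqOn_zero_of_setLIntegral_quotient_ne_top (by positivity) hg
    ((hflat.congr hgf.symm).isGloballyFlatAt hB) hgq
  exact hgf.symm.trans (hzero.eventuallyEq_of_mem (Metric.ball_mem_nhds z₀ (by positivity)))

lemma wirtingerDBar_isBigO_self (hf : ContDiffAt ℝ 1 f z₀) (hflat : IsFlatAt (wirtingerDBar f) z₀)
    (hfin : ¬ VanishesInfiniteOrder f z₀) : wirtingerDBar f =O[𝓝 z₀] f := by
  obtain hf0 | ⟨k, hk⟩ := isFlatAt_or_isBigO hf hflat
  · exact absurd hf0.vanishesInfiniteOrder hfin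
  · exact (hflat k).trans hk

lemma exists_setLIntegral_quotient_ne_top (h : wirtingerDBar f =O[𝓝 z₀] f) :
    ∃ U ∈ 𝓝 z₀, ∫⁻ z in U, ‖wirtingerDBar f z / f z‖ₑ ^ 2 ≠ ⊤ := by
  obtain ⟨C, hC0, hC⟩ := h.exists_nonneg
  obtain ⟨ε, hε, hball⟩ := Metric.eventually_nhds_iff_ball.1 hC.bound
  refine ⟨Metric.ball z₀ ε, Metric.ball_mem_nhds z₀ hε, ?_⟩
  refine ne_top_of_le_ne_top (b := ENNReal.ofReal C ^ 2 * volume (Metric.ball z₀ ε)) ?_ ?_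
  · exact ENNReal.mul_ne_top (by finiteness) measure_ball_lt_top.ne
  rw [← setLIntegral_const]
  refine setLIntegral_mono measurable_const fun z hz => ?_
  gcongr
  rw [← ofReal_norm, norm_div]
  exact ENNReal.ofReal_le_ofReal (div_le_of_le_mul₀ (norm_nonneg _) hC0 (hball z hz))

lemma integrableAtFilter_norm_sq (hf : ∀ᶠ z in 𝓝 z₀, ContinuousAt f z) :
    IntegrableAtFilter (fun z => ‖f z‖ ^ 2) (𝓝 z₀) := by
  obtain ⟨ε, hε, hball⟩ := Metric.nhds_basis_closedBall.eventually_iff.1 hf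
  have hcont : ContinuousOn f (Metric.closedBall z₀ ε) := fun z hz => (hball hz).continuousWithinAt
  exact ⟨_, Metric.closedBall_mem_nhds z₀ hε,
    (hcont.norm.pow 2).integrableOn_compact (isCompact_closedBall z₀ ε)⟩

lemma not_vanishesInfiniteOrder_of_setLIntegral_quotient_ne_top (hf : ContDiffAt ℝ 2 f z₀)
    (hflat : IsFlatAt (wirtingerDBar f) z₀) (hne : ∃ᶠ z in 𝓝 z₀, f z ≠ 0)
    (hq : ∃ U ∈ 𝓝 z₀, ∫⁻ z in U, ‖wirtingerDBar f z / f z‖ₑ ^ 2 ≠ ⊤) :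
    ¬ VanishesInfiniteOrder f z₀ := by
  have hf1 : ContDiffAt ℝ 1 f z₀ := hf.of_le one_le_two
  obtain hf0 | ⟨k, hk⟩ := isFlatAt_or_isBigO hf1 hflat
  · exact absurd (eventuallyEq_zero_of_isFlatAt hf hf0 hq) (by simpa [EventuallyEq] using hne)
  · exact not_vanishesInfiniteOrder_of_isBigO (integrableAtFilter_norm_sq <|
      (hf1.eventually (by simp)).mono fun _ hz => hz.continuousAt) hk

lemma isBigO_iff_exists_isOpen (hW : W ∈ 𝓝 z₀) :
    wirtingerDBar f =O[𝓝 z₀] f ↔ ∃ U : Set ℂ, IsOpen U ∧ z₀ ∈ U ∧ U ⊆ W ∧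
      ∃ C : ℝ, ∀ z ∈ U, ‖wirtingerDBar f z‖ ≤ C * ‖f z‖ := by
  constructor
  · intro h
    obtain ⟨C, hC⟩ := h.bound
    obtain ⟨U, hU, hUopen, hz₀⟩ := eventually_nhds_iff.1 (hC.and hW)
    exact ⟨U, hUopen, hz₀, fun z hz => (hU z hz).2, C, fun z hz => (hU z hz).1⟩
  · rintro ⟨U, hU, hz₀, -, C, hC⟩
    exact .of_bound C (eventually_of_mem (hU.mem_nhds hz₀) hC)

lemma exists_mem_nhds_setLIntegral_iff (hW : W ∈ 𝓝 z₀) :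
    (∃ U ∈ 𝓝 z₀, ∫⁻ z in U, ‖wirtingerDBar f z / f z‖ₑ ^ 2 ≠ ⊤) ↔
      ∃ U : Set ℂ, IsOpen U ∧ z₀ ∈ U ∧ U ⊆ W ∧
        ∫⁻ z in U, ENNReal.ofReal (‖wirtingerDBar f z‖ ^ 2 / ‖f z‖ ^ 2) < ⊤ := by
  have hsq (z : ℂ) : ENNReal.ofReal (‖wirtingerDBar f z‖ ^ 2 / ‖f z‖ ^ 2) =
      ‖wirtingerDBar f z / f z‖ₑ ^ 2 := by
    rw [← div_pow, ← norm_div, ENNReal.ofReal_pow (norm_nonneg _), ofReal_norm]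
  simp only [hsq, lt_top_iff_ne_top]
  constructor
  · rintro ⟨U, hU, hq⟩
    obtain ⟨V, hV, hVopen, hz₀⟩ := mem_nhds_iff.1 (inter_mem hU hW)
    exact ⟨V, hVopen, hz₀, hV.trans Set.inter_subset_right,
      ne_top_of_le_ne_top hq (lintegral_mono_set (hV.trans Set.inter_subset_left))⟩
  · rintro ⟨U, hU, hz₀, -, hq⟩
    exact ⟨U, hU.mem_nhds hz₀, hq⟩

theorem finite_order_characterization_general (hW : W ∈ 𝓝 z₀) (hf : ContDiffAt ℝ 2 f z₀)
    (hflat : IsFlatAt (wirtingerDBar f) z₀) (hne : ∃ᶠ z in 𝓝 z₀, f z ≠ 0) :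
    ((¬ VanishesInfiniteOrder f z₀) ↔
      ∃ U : Set ℂ, IsOpen U ∧ z₀ ∈ U ∧ U ⊆ W ∧
        ∃ C : ℝ, ∀ z ∈ U, ‖wirtingerDBar f z‖ ≤ C * ‖f z‖) ∧
    ((¬ VanishesInfiniteOrder f z₀) ↔
      ∃ U : Set ℂ, IsOpen U ∧ z₀ ∈ U ∧ U ⊆ W ∧
        ∫⁻ z in U, ENNReal.ofReal (‖wirtingerDBar f z‖ ^ 2 / ‖f z‖ ^ 2) < ⊤) := by
  rw [← isBigO_iff_exists_isOpen hW, ← exists_mem_nhds_setLIntegral_iff hW]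
  have bound_of_finite := wirtingerDBar_isBigO_self (hf.of_le one_le_two) hflat
  have finite_of_integrable :=
    not_vanishesInfiniteOrder_of_setLIntegral_quotient_ne_top hf hflat hne
  exact ⟨⟨bound_of_finite, fun h => finite_of_integrable (exists_setLIntegral_quotient_ne_top h)⟩,
    ⟨fun h => exists_setLIntegral_quotient_ne_top (bound_of_finite h), finite_of_integrable⟩⟩

end Characterization

section HolomorphicExtension

variable {Ω W : Set ℂ} {u f : ℂ → ℂ} {z₀ : ℂ}

lemma isFlatAt_wirtingerDBar_of_eqOn (hΩ : IsOpen Ω) (hz₀ : z₀ ∈ closure Ω)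
    (hu : DifferentiableOn ℂ u Ω) (hW : IsOpen W) (hz₀W : z₀ ∈ W)
    (hf : ContDiffOn ℝ (⊤ : ℕ∞) f W) (hfu : Set.EqOn f u (W ∩ Ω)) :
    IsFlatAt (wirtingerDBar f) z₀ := by
  refine isFlatAt_of_frequently_eventuallyEq_zero
    ((contDiffOn_wirtingerDBar hW hf (by simp)).contDiffAt (hW.mem_nhds hz₀W)) ?_
  refine ((mem_closure_iff_frequently.1 hz₀).and_eventually (hW.mem_nhds hz₀W)).mono ?_
  rintro z ⟨hzΩ, hzW⟩
  filter_upwards [(hW.inter hΩ).mem_nhds ⟨hzW, hzΩ⟩] with w hw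
  rw [wirtingerDBar_congr (eventually_of_mem ((hW.inter hΩ).mem_nhds hw) hfu),
    wirtingerDBar_eq_zero (hu.differentiableAt (hΩ.mem_nhds hw.2)), Pi.zero_apply]

lemma frequently_ne_zero_of_eqOn (hΩ : IsOpen Ω) (hΩc : IsPreconnected Ω) (hz₀ : z₀ ∈ closure Ω)
    (hu : DifferentiableOn ℂ u Ω) (hu0 : ¬ Set.EqOn u 0 Ω) (hW : W ∈ 𝓝 z₀)
    (hfu : Set.EqOn f u (W ∩ Ω)) : ∃ᶠ z in 𝓝 z₀, f z ≠ 0 := by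
  intro hf
  simp only [ne_eq, not_not] at hf
  obtain ⟨z, hzΩ, hz⟩ := ((mem_closure_iff_frequently.1 hz₀).and_eventually
    (hf.and hW).eventually_nhds).exists
  refine hu0 ((hu.analyticOnNhd hΩ).eqOn_zero_of_preconnected_of_eventuallyEq_zero hΩc hzΩ ?_)
  filter_upwards [hz, hΩ.mem_nhds hzΩ] with w ⟨hfw, hwW⟩ hwΩ
  rw [← hfu ⟨hwW, hwΩ⟩, hfw, Pi.zero_apply]

end HolomorphicExtension

/-- Corollary 5.3: for a smooth extension `ũ` across a boundary point `z₀` of a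
nonconstant holomorphic function, with `ũ(z₀) = 0`, the following are equivalent:
(1) `ũ` vanishes to finite order at `z₀`; (2) `|∂̄ũ|/|ũ| ∈ L^∞` near `z₀`;
(3) `|∂̄ũ|/|ũ| ∈ L²` near `z₀`. -/
theorem finite_order_characterization
    (Ω : Set ℂ) (hΩopen : IsOpen Ω) (hΩconn : IsConnected Ω)
    (z₀ : ℂ) (hz₀ : z₀ ∈ frontier Ω)
    (u : ℂ → ℂ) (hu : DifferentiableOn ℂ u Ω)
    (hnonconst : ¬ ∃ c : ℂ, Set.EqOn u (fun _ => c) Ω)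
    (W : Set ℂ) (hWopen : IsOpen W) (hz₀W : z₀ ∈ W)
    (ut : ℂ → ℂ) (hsmooth : ContDiffOn ℝ (⊤ : ℕ∞) ut W)
    (hagree : Set.EqOn ut u (W ∩ Ω)) (hut0 : ut z₀ = 0) :
    ((¬ VanishesInfiniteOrder ut z₀) ↔
      ∃ U : Set ℂ, IsOpen U ∧ z₀ ∈ U ∧ U ⊆ W ∧
        ∃ C : ℝ, ∀ z ∈ U, ‖wirtingerDBar ut z‖ ≤ C * ‖ut z‖) ∧
    ((¬ VanishesInfiniteOrder ut z₀) ↔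
      ∃ U : Set ℂ, IsOpen U ∧ z₀ ∈ U ∧ U ⊆ W ∧
        ∫⁻ z in U, ENNReal.ofReal (‖wirtingerDBar ut z‖ ^ 2 / ‖ut z‖ ^ 2) < ⊤) :=
  have hcl : z₀ ∈ closure Ω := frontier_subset_closure hz₀
  have hW : W ∈ 𝓝 z₀ := hWopen.mem_nhds hz₀W
  finite_order_characterization_general hW ((hsmooth.contDiffAt hW).of_le ENat.LEInfty.out)
    (isFlatAt_wirtingerDBar_of_eqOn hΩopen hcl hu hWopen hz₀W hsmooth hagree)
    (frequently_ne_zero_of_eqOn hΩopen hΩconn.isPreconnected hcl hu (fun h => hnonconst ⟨0, h⟩) hW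
      hagree)
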